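/- arXiv:1704.04321 — 11 statements merged into one kernel-verified Lean document; each statement's English description precedes it below -/
import Mathlib

section
/- Let f, g : ℝ³ → ℝ be measurable functions such that D(|f|,|f|) < ∞, D(|g|,|g|) < ∞ and D(|f|,|g|) < ∞. Then the Cauchy–Schwarz inequality for the Coulomb energy holds: D(f,g)² ≤ D(f,f) · D(g,g). -/
/-!
The Coulomb kernel is, up to a positive constant, a superposition of products: with
`K (s, z) x = √s · exp (-s ‖x - z‖²)`,

  `∫₀^∞ ∫_{ℝ³} K (s, z) x · K (s, z) y dz ds = c · ‖x - y‖⁻¹`   for `x ≠ y`.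

The inner integral is a Gaussian integral by the parallelogram law, the outer one is a Gamma
integral (`kernel_integral`). By Fubini, whose hypothesis is exactly the finiteness of the Coulomb
double integral of absolute values, `c · D(f,g) = ∫ F · G` where `F w = ∫ f(x) K w x dx` and
likewise for `G` (`coulomb_representation`). The claim is then the Cauchy–Schwarz inequality
for `∫ F · G` (`sq_integral_mul_le`).
-/

open MeasureTheory

noncomputable abbrev coulombEnergy (f g : EuclideanSpace ℝ (Fin 3) → ℝ) : ℝ :=
  ∫ x, ∫ y, f x * g y * ‖x - y‖⁻¹

/-- The Coulomb double integral of `|f|` against `|g|` is finite. -/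
def CoulombFinite (f g : EuclideanSpace ℝ (Fin 3) → ℝ) : Prop :=
  ∫⁻ x, ∫⁻ y, ENNReal.ofReal (|f x| * |g y| * ‖x - y‖⁻¹) < ⊤

namespace CoulombCS

open Set

/-- Euclidean three-space. -/
abbrev E3 : Type := EuclideanSpace ℝ (Fin 3)

/-- The measure `ds dz` on `(0, ∞) × ℝ³`. -/
noncomputable def paramMeasure : Measure (ℝ × E3) :=
  (volume.restrict (Ioi (0 : ℝ))).prod volume

instance : SFinite paramMeasure := by
  unfold paramMeasure; infer_instance

/-- The Gaussian factor `√s · exp (-s ‖x - z‖²)` with parameter `w = (s, z)`. -/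
noncomputable def kernel (w : ℝ × E3) (x : E3) : ℝ :=
  √w.1 * Real.exp (-w.1 * ‖x - w.2‖ ^ 2)

lemma kernel_nonneg (w : ℝ × E3) (x : E3) : 0 ≤ kernel w x := by
  unfold kernel; positivity

/-- The constant `c` in the superposition formula; its value is `π² / 2`. -/
noncomputable def coulombConst : ℝ :=
  (Real.pi / 2) ^ (3 / 2 : ℝ) * (√2 * Real.Gamma (1 / 2))

lemma coulombConst_pos : 0 < coulombConst := by
  unfold coulombConst
  have := Real.pi_pos
  have := Real.Gamma_pos_of_pos (s := 1 / 2) (by norm_num)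
  positivity

lemma parallelogram (x y z : E3) :
    ‖x - z‖ ^ 2 + ‖y - z‖ ^ 2
      = 2 * ‖z - (1 / 2 : ℝ) • (x + y)‖ ^ 2 + ‖x - y‖ ^ 2 / 2 := by
  simp only [EuclideanSpace.norm_sq_eq, Fin.sum_univ_three, Real.norm_eq_abs, sq_abs,
    PiLp.sub_apply, PiLp.smul_apply, PiLp.add_apply, smul_eq_mul]
  ring

lemma kernel_mul_kernel {s : ℝ} (hs : 0 < s) (x y z : E3) :
    kernel (s, z) x * kernel (s, z) y = s * Real.exp (-(‖x - y‖ ^ 2 / 2 * s)) *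
      Real.exp (-(2 * s) * ‖z - (1 / 2 : ℝ) • (x + y)‖ ^ 2) := by
  have h := parallelogram x y z
  have h1 : √s * √s = s := Real.mul_self_sqrt hs.le
  calc kernel (s, z) x * kernel (s, z) y
      = (√s * √s) * Real.exp (-s * (‖x - z‖ ^ 2 + ‖y - z‖ ^ 2)) := by
        simp only [kernel]; rw [mul_add, Real.exp_add]; ring
    _ = _ := by
        rw [h, h1, mul_assoc s, ← Real.exp_add]; congr 2; ring

lemma gaussian_integral {s : ℝ} (hs : 0 < s) (x y : E3) :
    ∫ z, kernel (s, z) x * kernel (s, z) y =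
      (Real.pi / 2) ^ (3 / 2 : ℝ) *
        (s ^ ((1 / 2 : ℝ) - 1) * Real.exp (-(‖x - y‖ ^ 2 / 2 * s))) := by
  simp_rw [kernel_mul_kernel hs x y, integral_const_mul]
  rw [integral_sub_right_eq_self (fun z : E3 => Real.exp (-(2 * s) * ‖z‖ ^ 2)),
    GaussianFourier.integral_rexp_neg_mul_sq_norm (by positivity)]
  have h1 : Real.pi / (2 * s) = (Real.pi / 2) * s⁻¹ := by field_simp
  have h2 : s * (s⁻¹) ^ (3 / 2 : ℝ) = s ^ ((1 / 2 : ℝ) - 1) := by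
    rw [Real.inv_rpow hs.le, ← Real.rpow_neg hs.le]
    nth_rewrite 1 [← Real.rpow_one s]
    rw [← Real.rpow_add hs]; norm_num
  have h3 : (Module.finrank ℝ E3 : ℝ) / 2 = 3 / 2 := by simp
  rw [h3, h1, Real.mul_rpow (by positivity) (by positivity), ← h2]
  ring

lemma gaussian_integrable {s : ℝ} (hs : 0 < s) (x y : E3) :
    Integrable fun z => kernel (s, z) x * kernel (s, z) y := by
  -- A non-integrable function has Bochner integral zero, but this integral is positive.
  apply Integrable.of_integral_ne_zero
  rw [gaussian_integral hs]
  have := Real.pi_pos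
  positivity

lemma gamma_integral {r : ℝ} (hr : 0 < r) :
    ∫ s in Ioi (0 : ℝ), (Real.pi / 2) ^ (3 / 2 : ℝ) *
        (s ^ ((1 / 2 : ℝ) - 1) * Real.exp (-(r ^ 2 / 2 * s))) = coulombConst * r⁻¹ := by
  rw [integral_const_mul, Real.integral_rpow_mul_exp_neg_mul_Ioi (by norm_num) (by positivity)]
  have h : (1 / (r ^ 2 / 2)) ^ (1 / 2 : ℝ) = √2 * r⁻¹ := by
    rw [← Real.sqrt_eq_rpow, one_div_div, Real.sqrt_div (by norm_num), Real.sqrt_sq hr.le]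
    rfl
  rw [h, coulombConst]
  ring

/-- The superposition formula, off the diagonal (on the diagonal the left side is infinite, while
the junk value of `‖0‖⁻¹` is zero). -/
lemma kernel_integral {x y : E3} (hxy : x ≠ y) :
    ∫⁻ w, ENNReal.ofReal (kernel w x * kernel w y) ∂paramMeasure
      = ENNReal.ofReal (coulombConst * ‖x - y‖⁻¹) := by
  have hr : 0 < ‖x - y‖ := norm_pos_iff.2 (sub_ne_zero.2 hxy)
  have hm : Measurable fun w : ℝ × E3 => ENNReal.ofReal (kernel w x * kernel w y) := by
    unfold kernel; fun_prop
  have hpos := mul_pos coulombConst_pos (inv_pos.2 hr)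
  have := Real.pi_pos
  rw [paramMeasure, lintegral_prod _ hm.aemeasurable, ← gamma_integral hr,
    ofReal_integral_eq_lintegral_ofReal]
  · refine setLIntegral_congr_fun measurableSet_Ioi fun s hs => ?_
    rw [← gaussian_integral hs x y, ofReal_integral_eq_lintegral_ofReal
      (gaussian_integrable hs x y)]
    exact Filter.Eventually.of_forall fun z =>
      mul_nonneg (kernel_nonneg _ _) (kernel_nonneg _ _)
  · apply Integrable.of_integral_ne_zero
    rw [gamma_integral hr]
    exact hpos.ne'
  · filter_upwards [ae_restrict_mem measurableSet_Ioi] with s hs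
    have : 0 < s := hs
    simp only [Pi.zero_apply]
    positivity

lemma kernel_integral_real {x y : E3} (hxy : x ≠ y) :
    ∫ w, kernel w x * kernel w y ∂paramMeasure = coulombConst * ‖x - y‖⁻¹ := by
  rw [integral_eq_lintegral_of_nonneg_ae, kernel_integral hxy, ENNReal.toReal_ofReal]
  · have := coulombConst_pos
    positivity
  · exact Filter.Eventually.of_forall fun w =>
      mul_nonneg (kernel_nonneg _ _) (kernel_nonneg _ _)
  · refine Measurable.aestronglyMeasurable ?_
    unfold kernel; fun_prop

lemma ae_ne : ∀ᵐ p : E3 × E3, p.1 ≠ p.2 := by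
  have h : (volume : Measure (E3 × E3)) {p | p.1 = p.2} = 0 := by
    rw [Measure.volume_eq_prod, Measure.measure_prod_null
      (measurableSet_eq_fun measurable_fst measurable_snd)]
    refine Filter.Eventually.of_forall fun x => ?_
    have : Prod.mk x ⁻¹' {p : E3 × E3 | p.1 = p.2} = {x} := by
      ext y; simp [eq_comm]
    simp [this]
  simpa [ae_iff] using h

/-- The transform `w ↦ ∫ f(x) K w x dx`. -/
noncomputable def transform (f : E3 → ℝ) (w : ℝ × E3) : ℝ := ∫ x, f x * kernel w x

section Representation

variable {f g : E3 → ℝ}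

lemma integrable_coulomb (hf : Measurable f) (hg : Measurable g) (hfg : CoulombFinite f g) :
    Integrable fun p : E3 × E3 => f p.1 * g p.2 * ‖p.1 - p.2‖⁻¹ := by
  have hm : Measurable fun p : E3 × E3 => f p.1 * g p.2 * ‖p.1 - p.2‖⁻¹ := by fun_prop
  refine ⟨hm.aestronglyMeasurable, ?_⟩
  rw [HasFiniteIntegral, Measure.volume_eq_prod, lintegral_prod _ hm.enorm.aemeasurable]
  refine lt_of_eq_of_lt ?_ hfg
  refine lintegral_congr fun x => lintegral_congr fun y => ?_
  rw [← ofReal_norm]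
  simp

/-- The integrand to which Fubini's theorem is applied. -/
noncomputable def fubiniIntegrand (f g : E3 → ℝ) (q : (ℝ × E3) × (E3 × E3)) : ℝ :=
  (f q.2.1 * kernel q.1 q.2.1) * (g q.2.2 * kernel q.1 q.2.2)

lemma integrable_fubiniIntegrand (hf : Measurable f) (hg : Measurable g)
    (hfg : CoulombFinite f g) :
    Integrable (fubiniIntegrand f g) (paramMeasure.prod volume) := by
  have hm : Measurable (fubiniIntegrand f g) := by
    unfold fubiniIntegrand kernel; fun_prop
  refine ⟨hm.aestronglyMeasurable, ?_⟩
  rw [HasFiniteIntegral, lintegral_prod_symm _ hm.enorm.aemeasurable]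
  have key : ∀ᵐ p : E3 × E3, ∫⁻ w, ‖fubiniIntegrand f g (w, p)‖ₑ ∂paramMeasure
      = ‖coulombConst * (f p.1 * g p.2 * ‖p.1 - p.2‖⁻¹)‖ₑ := by
    filter_upwards [ae_ne] with p hp
    have h1 : ∀ w, ‖fubiniIntegrand f g (w, p)‖ₑ
        = ‖f p.1 * g p.2‖ₑ * ENNReal.ofReal (kernel w p.1 * kernel w p.2) := by
      intro w
      rw [← Real.enorm_of_nonneg (mul_nonneg (kernel_nonneg _ _) (kernel_nonneg _ _)),
        ← enorm_mul]
      congr 1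
      simp only [fubiniIntegrand]; ring
    have hm' : Measurable fun w : ℝ × E3 =>
        ENNReal.ofReal (kernel w p.1 * kernel w p.2) := by
      unfold kernel; fun_prop
    have hc := coulombConst_pos
    simp_rw [h1]
    rw [lintegral_const_mul _ hm', kernel_integral hp,
      ← Real.enorm_of_nonneg (by positivity), ← enorm_mul]
    congr 1
    ring
  rw [lintegral_congr_ae key]
  exact ((integrable_coulomb hf hg hfg).const_mul coulombConst).2

lemma fubiniIntegrand_inner (f g : E3 → ℝ) (w : ℝ × E3) :
    ∫ p : E3 × E3, fubiniIntegrand f g (w, p) = transform f w * transform g w :=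
  integral_prod_mul (fun x => f x * kernel w x) (fun y => g y * kernel w y)

lemma integrable_transform_mul (hf : Measurable f) (hg : Measurable g)
    (hfg : CoulombFinite f g) :
    Integrable (fun w => transform f w * transform g w) paramMeasure := by
  simpa only [fubiniIntegrand_inner] using
    (integrable_fubiniIntegrand hf hg hfg).integral_prod_left

/-- The Coulomb energy is, up to a positive constant, an `L²` pairing of the transforms. -/
lemma coulomb_representation (hf : Measurable f) (hg : Measurable g)
    (hfg : CoulombFinite f g) :
    ∫ w, transform f w * transform g w ∂paramMeasure = coulombConst * coulombEnergy f g := by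
  have hD : coulombEnergy f g = ∫ p : E3 × E3, f p.1 * g p.2 * ‖p.1 - p.2‖⁻¹ :=
    (integral_prod _ (integrable_coulomb hf hg hfg)).symm
  have hi := integrable_fubiniIntegrand hf hg hfg
  simp_rw [← fubiniIntegrand_inner]
  rw [hD, ← integral_prod _ hi, integral_prod_symm _ hi, ← integral_const_mul]
  refine integral_congr_ae ?_
  filter_upwards [ae_ne] with p hp
  have h1 : ∀ w, fubiniIntegrand f g (w, p)
      = f p.1 * g p.2 * (kernel w p.1 * kernel w p.2) := by
    intro w; simp only [fubiniIntegrand]; ring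
  simp_rw [h1]
  rw [integral_const_mul, kernel_integral_real hp]
  ring

end Representation

/-- Cauchy–Schwarz, from the discriminant of the nonnegative quadratic `t ↦ ∫ (t F + G)²`. -/
lemma sq_integral_mul_le {W : Type*} [MeasurableSpace W] {μ : Measure W} {F G : W → ℝ}
    (hFF : Integrable (fun w => F w * F w) μ) (hGG : Integrable (fun w => G w * G w) μ)
    (hFG : Integrable (fun w => F w * G w) μ) :
    (∫ w, F w * G w ∂μ) ^ 2 ≤ (∫ w, F w * F w ∂μ) * ∫ w, G w * G w ∂μ := by
  have hq : ∀ t : ℝ, 0 ≤ (∫ w, F w * F w ∂μ) * (t * t)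
      + (2 * ∫ w, F w * G w ∂μ) * t + ∫ w, G w * G w ∂μ := by
    intro t
    have h0 : 0 ≤ ∫ w, (t * t) * (F w * F w) + (2 * t) * (F w * G w) + G w * G w ∂μ :=
      integral_nonneg fun w => by
        have := sq_nonneg (t * F w + G w)
        simp only [Pi.zero_apply]
        linarith
    have h1 : Integrable (fun w => (t * t) * (F w * F w) + (2 * t) * (F w * G w)) μ :=
      (hFF.const_mul _).add (hFG.const_mul _)
    rw [integral_add h1 hGG,
      integral_add (hFF.const_mul _) (hFG.const_mul _), integral_const_mul,
      integral_const_mul] at h0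
    linarith
  have := discrim_le_zero hq
  rw [discrim] at this
  linarith

end CoulombCS

open CoulombCS in
/-- Cauchy–Schwarz inequality for the Coulomb energy `D(f,g) = ∬ f(x) g(y) |x-y|⁻¹`. -/
theorem coulomb_cauchy_schwarz (f g : EuclideanSpace ℝ (Fin 3) → ℝ)
    (hf : Measurable f) (hg : Measurable g)
    (hff : CoulombFinite f f) (hgg : CoulombFinite g g) (hfg : CoulombFinite f g) :
    (coulombEnergy f g) ^ 2 ≤ coulombEnergy f f * coulombEnergy g g := by
  have h := sq_integral_mul_le (integrable_transform_mul hf hf hff)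
    (integrable_transform_mul hg hg hgg) (integrable_transform_mul hf hg hfg)
  rw [coulomb_representation hf hf hff, coulomb_representation hg hg hgg,
    coulomb_representation hf hg hfg] at h
  have hc : 0 < coulombConst ^ 2 := pow_pos coulombConst_pos 2
  refine le_of_mul_le_mul_left ?_ hc
  linarith
end

section
/- Let f, g : ℝ³ → ℝ be measurable functions such that D(|f|,|f|) < ∞, D(|g|,|g|) < ∞ and D(|f|,|g|) < ∞. If g is not almost everywhere zero and equality D(f,g)² = D(f,f) · D(g,g) holds, then there exists a constant C ∈ ℝ such that f = C g almost everywhere in ℝ³. -/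
/-!
The point is that the Coulomb kernel is strictly positive definite: `D(h,h) ≥ 0`, with `D(h,h) = 0`
only for `h = 0` a.e. Given this, put `C = D(f,g) / D(g,g)`, where `D(g,g) ≠ 0` as `g` is not a.e.
zero. The equality hypothesis says `D(f - C g, f - C g) = 0`, so `f = C g` a.e.

Strict positivity comes from the Fefferman–de la Llave formula: for some constant `c > 0`,
`c / |x - y| = ∫₀^∞ |B_r(x) ∩ B_r(y)| r⁻⁵ dr = ∫∫ 1_{B_r(z)}(x) 1_{B_r(z)}(y) dz r⁻⁵ dr`.
The middle term is invariant under Euclidean motions and homogeneous of degree `-1`, which gives the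
first equality without computing any volume (`exists_lens_const`, `exists_kernel_const`).
By Fubini, `c D(h,h) = ∫∫ (∫_{B_r(z)} h)² dz r⁻⁵ dr` (`coulomb_eq_sq`). If this vanishes, then for
a.e. `z` the integral of `h` over `B_r(z)` is zero for a.e. `r > 0`, and Lebesgue's differentiation
theorem yields `h z = 0` (`ae_eq_zero_of_coulombEnergy_eq_zero`). Local integrability of `h`, needed
for the latter, follows from `D(|h|,|h|) < ∞`, the kernel being bounded below on bounded sets.
-/

open MeasureTheory

open Set Filter Topology Metric
open scoped ENNReal

/-- Euclidean space `ℝ³`. -/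
abbrev E3 : Type := EuclideanSpace ℝ (Fin 3)

/-! ### The integral of lens volumes -/

/-- A similarity of ratio `‖x - y‖` maps the pair `(0, e)` to `(x, y)`, hence multiplies the volume
of the intersection of the balls by `‖x - y‖ ^ 3`. -/
lemma volume_lens_scale {x y e : E3} (he : ‖e‖ = 1) (hxy : x ≠ y) (s : ℝ) :
    volume (closedBall x (‖x - y‖ * s) ∩ closedBall y (‖x - y‖ * s)) =
      ENNReal.ofReal (‖x - y‖ ^ 3) * volume (closedBall (0 : E3) s ∩ closedBall e s) := by
  set a : ℝ := ‖x - y‖ with ha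
  have ha0 : 0 < a := norm_pos_iff.2 (sub_ne_zero.2 hxy)
  have hu : ‖e‖ = ‖a⁻¹ • (y - x)‖ := by
    rw [norm_smul, norm_sub_rev y x, ← ha, he, norm_inv, Real.norm_of_nonneg ha0.le,
      inv_mul_cancel₀ ha0.ne']
  set ρ : E3 ≃ₗᵢ[ℝ] E3 := Submodule.reflection (Submodule.span ℝ {e - a⁻¹ • (y - x)})ᗮ with hρ
  -- `ρ` is a reflection that maps `e` to the unit vector in the direction of `y - x`.
  have hρe : ρ e = a⁻¹ • (y - x) := Submodule.reflection_sub hu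
  have hy : y = x + a • ρ e := by
    rw [hρe, smul_smul, mul_inv_cancel₀ ha0.ne', one_smul]; abel
  have hset : (fun z => ρ z) ⁻¹' ((fun z => a • z) ⁻¹' ((fun z => x + z) ⁻¹'
      (closedBall x (a * s) ∩ closedBall y (a * s)))) = closedBall (0 : E3) s ∩ closedBall e s := by
    ext z
    have h2 : dist (x + a • ρ z) y = a * dist z e := by
      rw [hy, dist_add_left, dist_smul₀, ρ.dist_map, Real.norm_of_nonneg ha0.le]
    have h1 : dist (x + a • ρ z) x = a * dist z 0 := by
      rw [dist_eq_norm, add_sub_cancel_left, norm_smul, ρ.norm_map, dist_zero_right,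
        Real.norm_of_nonneg ha0.le]
    simp only [mem_preimage, mem_inter_iff, mem_closedBall, h1, h2, mul_le_mul_iff_right₀ ha0]
  have hρm : ∀ s : Set E3, volume ((fun z => ρ z) ⁻¹' s) = volume s := fun s =>
    ρ.measurePreserving.measure_preimage_emb ρ.toHomeomorph.measurableEmbedding s
  rw [← hset, hρm _, Measure.addHaar_preimage_smul _ ha0.ne',
    measure_preimage_add, ← mul_assoc, ← ENNReal.ofReal_mul (by positivity),
    finrank_euclideanSpace_fin, abs_of_pos (by positivity), mul_inv_cancel₀ (by positivity),
    ENNReal.ofReal_one, one_mul]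

lemma measurable_lens (x y : E3) :
    Measurable fun r : ℝ => volume (closedBall x r ∩ closedBall y r) := by
  apply Monotone.measurable
  intro r s h
  exact measure_mono (inter_subset_inter (closedBall_subset_closedBall h)
    (closedBall_subset_closedBall h))

/-- The measure `r⁻⁵ dr` on `(0, ∞)`, extended by zero to `ℝ`. -/
noncomputable def radialMeasure : Measure ℝ :=
  (volume.restrict (Ioi 0)).withDensity fun r => ENNReal.ofReal (r ^ 5)⁻¹

instance : SFinite radialMeasure := by unfold radialMeasure; infer_instance

/-- The substitution `r = ‖x - y‖ s` reduces the integral to its value for the pair `(0, e)`, where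
`e` is a fixed unit vector. That value is finite, since balls of radius less than `1/2` do not meet
and the integrand is `O(r⁻²)` at infinity, and nonzero, since the intersection has nonempty interior
for `r > 1`. -/
lemma exists_lens_const : ∃ c : ℝ, 0 < c ∧ ∀ x y : E3, x ≠ y →
    ∫⁻ r, volume (closedBall x r ∩ closedBall y r) ∂radialMeasure =
      ENNReal.ofReal (c * ‖x - y‖⁻¹) := by
  obtain ⟨e, he⟩ : ∃ e : E3, ‖e‖ = 1 := ⟨EuclideanSpace.single 0 1, by simp⟩
  have hden : Measurable fun r : ℝ => ENNReal.ofReal (r ^ 5)⁻¹ := by fun_prop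
  set V : ℝ → ℝ≥0∞ := fun r => volume (closedBall (0 : E3) r ∩ closedBall e r) with hV
  have hm : Measurable fun r : ℝ => ENNReal.ofReal (r ^ 5)⁻¹ * V r :=
    hden.mul (measurable_lens 0 e)
  set I : ℝ≥0∞ := ∫⁻ r in Ioi 0, ENNReal.ofReal (r ^ 5)⁻¹ * V r with hI
  have hItop : I ≠ ∞ := by
    have hb : ∀ r ∈ Ioi (0:ℝ), ENNReal.ofReal (r ^ 5)⁻¹ * V r ≤
        (Ioi (1/4 : ℝ)).indicator
          (fun r => ENNReal.ofReal (r ^ (-2 : ℝ)) * volume (ball (0 : E3) 1)) r := by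
      intro r hr
      have hr : 0 < r := hr
      by_cases h : 1/4 < r
      · rw [indicator_of_mem (by exact h)]
        calc ENNReal.ofReal (r ^ 5)⁻¹ * V r
            ≤ ENNReal.ofReal (r ^ 5)⁻¹ * volume (closedBall (0 : E3) r) := by
              gcongr; exact measure_mono inter_subset_left
          _ = ENNReal.ofReal (r ^ (-2 : ℝ)) * volume (ball (0 : E3) 1) := by
              rw [Measure.addHaar_closedBall _ _ hr.le, ← mul_assoc,
                ← ENNReal.ofReal_mul (by positivity), finrank_euclideanSpace_fin]
              congr 2
              rw [Real.rpow_neg hr.le, Real.rpow_two]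
              field_simp
      · have : V r = 0 := by
          have : closedBall (0 : E3) r ∩ closedBall e r = ∅ := by
            ext z
            simp only [mem_inter_iff, mem_closedBall, mem_empty_iff_false, iff_false, not_and, not_le]
            intro h1
            have := dist_triangle_left e 0 z
            rw [dist_zero_right, he] at this
            linarith
          simp [hV, this]
        simp [this]
    refine ne_top_of_le_ne_top ?_ (setLIntegral_mono' measurableSet_Ioi hb)
    refine ne_top_of_le_ne_top ?_ (lintegral_mono' Measure.restrict_le_self le_rfl)
    rw [lintegral_indicator measurableSet_Ioi, lintegral_mul_const _ (by fun_prop)]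
    refine ENNReal.mul_ne_top ?_ measure_ball_lt_top.ne
    have := (integrableOn_Ioi_rpow_of_lt (a := -2) (c := 1/4) (by norm_num) (by norm_num))
    exact this.lintegral_lt_top.ne
  have hIpos : I ≠ 0 := by
    rw [hI, Ne, lintegral_eq_zero_iff hm]
    intro h
    rw [EventuallyEq, ae_restrict_iff' measurableSet_Ioi] at h
    have hnull : volume (Ioi (1:ℝ)) = 0 := by
      refine measure_mono_null (fun r hr => ?_) (ae_iff.1 h)
      have hr : 1 < r := hr
      have h0 : 0 < r := by linarith
      simp only [mem_ofPred_eq, Classical.not_imp]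
      refine ⟨h0, ?_⟩
      have hVr : V r ≠ 0 := by
        refine ((isOpen_ball.inter isOpen_ball).measure_pos volume
          (⟨0, by simpa using h0, by simpa [he] using hr⟩ :
            (ball (0 : E3) r ∩ ball e r).Nonempty)).trans_le
          (measure_mono (inter_subset_inter ball_subset_closedBall ball_subset_closedBall)) |>.ne'
      simp [hVr, h0]
    simp at hnull
  refine ⟨I.toReal, ENNReal.toReal_pos hIpos hItop, fun x y hxy => ?_⟩
  set a : ℝ := ‖x - y‖ with ha
  have ha0 : 0 < a := norm_pos_iff.2 (sub_ne_zero.2 hxy)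
  rw [radialMeasure, lintegral_withDensity_eq_lintegral_mul _ hden (measurable_lens x y)]
  have himg : (fun r => a * r) '' Ioi (0:ℝ) = Ioi 0 := by
    simp [image_mul_left_Ioi ha0]
  rw [← himg, lintegral_image_eq_lintegral_abs_deriv_mul (f' := fun _ => a) measurableSet_Ioi
    (fun r _ => by simpa using ((hasDerivAt_id r).const_mul a).hasDerivWithinAt)
    (mul_right_injective₀ ha0.ne').injOn]
  have : ∀ r ∈ Ioi (0:ℝ), ENNReal.ofReal |a| * ((fun r => ENNReal.ofReal (r ^ 5)⁻¹) *
      fun r => volume (closedBall x r ∩ closedBall y r)) (a * r) =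
      ENNReal.ofReal a⁻¹ * (ENNReal.ofReal (r ^ 5)⁻¹ * V r) := by
    intro r hr
    have hr : 0 < r := hr
    rw [Pi.mul_apply, volume_lens_scale he hxy, ← ha, ← mul_assoc, ← mul_assoc, ← mul_assoc,
      ← ENNReal.ofReal_mul (by positivity), ← ENNReal.ofReal_mul (by positivity),
      ← ENNReal.ofReal_mul (by positivity), abs_of_pos ha0]
    congr 2
    field_simp
  rw [setLIntegral_congr_fun measurableSet_Ioi this,
    lintegral_const_mul _ hm, ENNReal.ofReal_mul ENNReal.toReal_nonneg,
    ENNReal.ofReal_toReal hItop, mul_comm]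

/-! ### The Fefferman–de la Llave representation -/

open Classical in
/-- The value at `x` of the indicator function of the closed ball of centre `p.1` and
radius `p.2`. -/
noncomputable def ballInd (x : E3) (p : E3 × ℝ) : ℝ := if dist x p.1 ≤ p.2 then 1 else 0

lemma measurable_ballInd {α : Type*} [MeasurableSpace α] {u : α → E3} {v : α → E3 × ℝ}
    (hu : Measurable u) (hv : Measurable v) : Measurable fun a => ballInd (u a) (v a) := by
  unfold ballInd
  exact Measurable.ite (measurableSet_le (hu.dist hv.fst) hv.snd) measurable_const measurable_const

lemma measurable_ballInd_mul (x y : E3) : Measurable fun p => ballInd x p * ballInd y p :=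
  (measurable_ballInd measurable_const measurable_id).mul
    (measurable_ballInd measurable_const measurable_id)

lemma ballInd_nonneg (x : E3) (p : E3 × ℝ) : 0 ≤ ballInd x p := by
  unfold ballInd; split_ifs <;> norm_num

/-- The measure `dz r⁻⁵ dr` on the set of pairs `(z, r)` that parametrize the closed balls
of `ℝ³`. -/
noncomputable def ballMeasure : Measure (E3 × ℝ) := volume.prod radialMeasure

instance : SFinite ballMeasure := by unfold ballMeasure; infer_instance

/-- The Fefferman–de la Llave representation of the Coulomb kernel. -/
lemma exists_kernel_const : ∃ c : ℝ, 0 < c ∧ ∀ x y : E3, x ≠ y →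
    ∫⁻ p, ENNReal.ofReal (ballInd x p * ballInd y p) ∂ballMeasure =
      ENNReal.ofReal (c * ‖x - y‖⁻¹) := by
  obtain ⟨c, hc, h⟩ := exists_lens_const
  refine ⟨c, hc, fun x y hxy => ?_⟩
  rw [ballMeasure, lintegral_prod_symm' _ (measurable_ballInd_mul x y).ennreal_ofReal, ← h x y hxy]
  refine lintegral_congr fun r => ?_
  rw [← lintegral_indicator_one
    (measurableSet_closedBall.inter measurableSet_closedBall)]
  refine lintegral_congr fun z => ?_
  simp only [ballInd, indicator, mem_inter_iff, mem_closedBall, dist_comm z, Pi.one_apply]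
  by_cases h1 : dist x z ≤ r <;> by_cases h2 : dist y z ≤ r <;> simp [h1, h2]

/-! ### The Coulomb energy as an integral of squares -/

lemma coulombFinite_iff {f g : E3 → ℝ} (hf : Measurable f) (hg : Measurable g) :
    CoulombFinite f g ↔
      Integrable (fun q : E3 × E3 => f q.1 * g q.2 * ‖q.1 - q.2‖⁻¹) (volume.prod volume) := by
  have hm : Measurable fun q : E3 × E3 => f q.1 * g q.2 * ‖q.1 - q.2‖⁻¹ := by fun_prop
  rw [Integrable, and_iff_right hm.aestronglyMeasurable, HasFiniteIntegral,
    lintegral_prod _ hm.enorm.aemeasurable, CoulombFinite]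
  simp only [← ofReal_norm, norm_mul, norm_inv, Real.norm_eq_abs, abs_norm]

/-- The diagonal is a null set, so the junk value `‖0‖⁻¹ = 0` of the kernel there is harmless. -/
lemma ae_ne : ∀ᵐ q : E3 × E3 ∂(volume.prod volume), q.1 ≠ q.2 := by
  have hs : MeasurableSet {q : E3 × E3 | q.1 ≠ q.2} :=
    (measurableSet_eq_fun measurable_fst measurable_snd).compl
  refine Measure.ae_prod_iff_ae_ae hs |>.2 ?_
  refine Eventually.of_forall fun x => ?_
  filter_upwards [compl_mem_ae_iff.2 (measure_singleton x)] with y hy using fun h => hy h.symm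

/-- The Coulomb energy of `h`, up to a positive factor, is the integral over all balls of the square
of the integral of `h` over the ball. -/
lemma coulomb_eq_sq (h : E3 → ℝ) (hm : Measurable h) (hfin : CoulombFinite h h) :
    ∃ c : ℝ, 0 < c ∧
      Integrable (fun p => (∫ x, h x * ballInd x p) ^ 2) ballMeasure ∧
      c * coulombEnergy h h = ∫ p, (∫ x, h x * ballInd x p) ^ 2 ∂ballMeasure := by
  obtain ⟨c, hc, hker⟩ := exists_kernel_const
  have hint := (coulombFinite_iff hm hm).1 hfin
  set T : (E3 × E3) × (E3 × ℝ) → ℝ := fun q =>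
    (h q.1.1 * ballInd q.1.1 q.2) * (h q.1.2 * ballInd q.1.2 q.2) with hT
  have hb1 : Measurable fun q : (E3 × E3) × (E3 × ℝ) => ballInd q.1.1 q.2 :=
    measurable_ballInd (by fun_prop) measurable_snd
  have hb2 : Measurable fun q : (E3 × E3) × (E3 × ℝ) => ballInd q.1.2 q.2 :=
    measurable_ballInd (by fun_prop) measurable_snd
  have hTm : Measurable T := by fun_prop
  have hTi : Integrable T ((volume.prod volume).prod ballMeasure) := by
    refine ⟨hTm.aestronglyMeasurable, ?_⟩
    rw [HasFiniteIntegral, lintegral_prod _ hTm.enorm.aemeasurable]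
    refine lt_of_eq_of_lt ?_ (hint.const_mul c).2
    refine lintegral_congr_ae ?_
    filter_upwards [ae_ne] with q hq
    have : ∀ p, ‖T (q, p)‖ₑ =
        ‖h q.1 * h q.2‖ₑ * ENNReal.ofReal (ballInd q.1 p * ballInd q.2 p) := by
      intro p
      rw [← Real.enorm_of_nonneg (mul_nonneg (ballInd_nonneg _ _) (ballInd_nonneg _ _)),
        ← enorm_mul]
      congr 1
      simp only [hT]; ring
    simp_rw [this]
    rw [lintegral_const_mul _ (measurable_ballInd_mul _ _).ennreal_ofReal, hker _ _ hq,
      ← Real.enorm_of_nonneg (by positivity), ← enorm_mul]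
    congr 1
    ring
  have hsq : ∀ p, ∫ q, T (q, p) ∂(volume.prod volume) = (∫ x, h x * ballInd x p) ^ 2 := by
    intro p
    rw [sq, ← integral_prod_mul]
  refine ⟨c, hc, ?_, ?_⟩
  · have := hTi.integral_prod_right
    simpa only [hsq] using this
  · have h1 := integral_prod_symm _ hTi
    simp only [hsq] at h1
    rw [← h1, integral_prod _ hTi, coulombEnergy, ← integral_prod _ hint, ← integral_const_mul]
    refine integral_congr_ae ?_
    filter_upwards [ae_ne] with q hq
    have : ∀ p, T (q, p) = (h q.1 * h q.2) * (ballInd q.1 p * ballInd q.2 p) := by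
      intro p; simp only [hT]; ring
    simp_rw [this]
    rw [integral_const_mul, integral_eq_lintegral_of_nonneg_ae
      (Eventually.of_forall fun p => mul_nonneg (ballInd_nonneg _ _) (ballInd_nonneg _ _))
      (measurable_ballInd_mul _ _).aestronglyMeasurable, hker _ _ hq,
      ENNReal.toReal_ofReal (by positivity)]
    ring

/-! ### Strict positivity -/

/-- On a ball `B` of radius `1` the kernel is at least `1/2`, so `(∫_B |h|)² ≤ 2 D(|h|,|h|)`. -/
lemma CoulombFinite.locallyIntegrable {h : E3 → ℝ} (hm : Measurable h)
    (hfin : CoulombFinite h h) : LocallyIntegrable h := by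
  intro x₀
  refine ⟨ball x₀ 1, ball_mem_nhds _ one_pos, hm.aestronglyMeasurable, ?_⟩
  set B := ball x₀ 1
  have hint := (coulombFinite_iff hm hm).1 hfin
  have hlt := (hint.const_mul 2).2
  have hle : (∫⁻ x in B, ‖h x‖ₑ) * (∫⁻ x in B, ‖h x‖ₑ) ≤
      ∫⁻ q : E3 × E3, ‖2 * (h q.1 * h q.2 * ‖q.1 - q.2‖⁻¹)‖ₑ ∂(volume.prod volume) := by
    rw [← lintegral_prod_mul hm.enorm.aemeasurable hm.enorm.aemeasurable, Measure.prod_restrict]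
    refine le_trans ?_ (setLIntegral_le_lintegral (B ×ˢ B) _)
    refine setLIntegral_mono_ae (by fun_prop) ?_
    filter_upwards [ae_ne] with q hq hqB
    rw [← enorm_mul]
    refine enorm_le_iff_norm_le.2 ?_
    have hd : 0 < ‖q.1 - q.2‖ := norm_pos_iff.2 (sub_ne_zero.2 hq)
    have hd2 : ‖q.1 - q.2‖ ≤ 2 := by
      rw [← dist_eq_norm]
      have := dist_triangle_right q.1 q.2 x₀
      have h1 := mem_ball.1 hqB.1
      have h2 := mem_ball.1 hqB.2
      linarith
    have : 1 ≤ 2 * ‖q.1 - q.2‖⁻¹ := by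
      rw [← div_eq_mul_inv, le_div_iff₀ hd]; linarith
    have e : 2 * (h q.1 * h q.2 * ‖q.1 - q.2‖⁻¹) = (2 * ‖q.1 - q.2‖⁻¹) * (h q.1 * h q.2) := by ring
    rw [e, norm_mul _ (h q.1 * h q.2), Real.norm_of_nonneg (by positivity : 0 ≤ 2 * ‖q.1 - q.2‖⁻¹)]
    exact le_mul_of_one_le_left (norm_nonneg _) this
  rw [HasFiniteIntegral]
  by_contra htop
  rw [not_lt, top_le_iff] at htop
  rw [htop, ENNReal.top_mul_top] at hle
  exact absurd hlt (not_lt.2 hle)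

/-- Strict positivity of the Coulomb energy. -/
lemma ae_eq_zero_of_coulombEnergy_eq_zero (h : E3 → ℝ) (hm : Measurable h)
    (hfin : CoulombFinite h h) (h0 : coulombEnergy h h = 0) : h =ᵐ[volume] 0 := by
  obtain ⟨c, hc, hi, heq⟩ := coulomb_eq_sq h hm hfin
  rw [h0, mul_zero] at heq
  have hz := (integral_eq_zero_iff_of_nonneg (fun p => sq_nonneg _) hi).1 heq.symm
  have hz2 := Measure.ae_ae_of_ae_prod hz
  filter_upwards [hz2, IsUnifLocDoublingMeasure.ae_tendsto_average volume
    (hfin.locallyIntegrable hm) 1] with z hz3 hlim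
  have hden : Measurable fun r : ℝ => ENNReal.ofReal (r ^ 5)⁻¹ := by fun_prop
  rw [radialMeasure, ae_withDensity_iff hden, ae_restrict_iff' measurableSet_Ioi] at hz3
  have hball : ∀ᵐ r : ℝ, r ∈ Ioi 0 → ∫ x in closedBall z r, h x = 0 := by
    filter_upwards [hz3] with r hr hr0
    have hr0' : 0 < r := hr0
    have := hr hr0 (by simpa using pow_pos hr0' 5)
    rw [← integral_indicator measurableSet_closedBall]
    have h3 : ∫ x, h x * ballInd x (z, r) = 0 := by simpa using this
    rw [← h3]
    congr 1
    ext x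
    simp [ballInd, indicator]
  -- A property of almost every `r > 0` holds for arbitrarily small `r > 0`.
  have hfreq : ∃ᶠ r in 𝓝[>] (0:ℝ), ∫ x in closedBall z r, h x = 0 := by
    rw [(nhdsGT_basis (0 : ℝ)).frequently_iff]
    intro ε hε
    by_contra! hcon
    have hnull : volume (Ioo 0 ε) = 0 :=
      measure_mono_null (fun r hr => by
        simp only [mem_compl_iff, mem_ofPred_eq, Classical.not_imp]
        exact ⟨hr.1, hcon r hr⟩) hball
    simp [hε.not_ge] at hnull
  have hlim' : Tendsto (fun r : ℝ => ⨍ y in closedBall z r, h y) (𝓝[>] 0) (𝓝 (h z)) := by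
    refine hlim (fun _ => z) (fun r => r) tendsto_id ?_
    filter_upwards [self_mem_nhdsWithin] with r hr
    simpa using (show (0:ℝ) < r from hr).le
  change h z = 0
  by_contra hne
  have := hlim'.eventually_ne hne
  obtain ⟨r, hr1, hr2⟩ := (hfreq.and_eventually this).exists
  exact hr2 (by rw [setAverage_eq, hr1, smul_zero])

/-! ### The equality case -/

/-- Equality case in the Cauchy–Schwarz inequality for the Coulomb energy: if `g` is not
a.e. zero and `D(f,g)² = D(f,f)·D(g,g)`, then `f = C·g` a.e. for some constant `C`. -/
theorem coulomb_cauchy_schwarz_eq (f g : EuclideanSpace ℝ (Fin 3) → ℝ)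
    (hf : Measurable f) (hg : Measurable g)
    (hff : CoulombFinite f f) (hgg : CoulombFinite g g) (hfg : CoulombFinite f g)
    (hgne : ¬ g =ᵐ[volume] 0)
    (heq : (coulombEnergy f g) ^ 2 = coulombEnergy f f * coulombEnergy g g) :
    ∃ C : ℝ, f =ᵐ[volume] fun x => C * g x := by
  have iff' := (coulombFinite_iff hf hf).1 hff
  have igg := (coulombFinite_iff hg hg).1 hgg
  have ifg := (coulombFinite_iff hf hg).1 hfg
  have hswap : (fun q : E3 × E3 => g q.1 * f q.2 * ‖q.1 - q.2‖⁻¹) =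
      fun q => (fun q : E3 × E3 => f q.1 * g q.2 * ‖q.1 - q.2‖⁻¹) q.swap := by
    funext q
    simp only [Prod.fst_swap, Prod.snd_swap, norm_sub_rev q.2 q.1]
    ring
  have igf : Integrable (fun q : E3 × E3 => g q.1 * f q.2 * ‖q.1 - q.2‖⁻¹)
      (volume.prod volume) := by
    rw [hswap]; exact ifg.swap
  have hsymm : coulombEnergy g f = coulombEnergy f g := by
    rw [coulombEnergy, coulombEnergy, ← integral_prod _ igf, ← integral_prod _ ifg, hswap]
    exact integral_prod_swap (fun q : E3 × E3 => f q.1 * g q.2 * ‖q.1 - q.2‖⁻¹)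
  have hgpos : coulombEnergy g g ≠ 0 := fun h0 =>
    hgne (ae_eq_zero_of_coulombEnergy_eq_zero g hg hgg h0)
  set C : ℝ := coulombEnergy f g / coulombEnergy g g with hC
  set h : E3 → ℝ := fun x => f x - C * g x with hh
  have hm : Measurable h := hf.sub (hg.const_mul C)
  have hexp : (fun q : E3 × E3 => h q.1 * h q.2 * ‖q.1 - q.2‖⁻¹) = fun q =>
      ((f q.1 * f q.2 * ‖q.1 - q.2‖⁻¹ - C * (f q.1 * g q.2 * ‖q.1 - q.2‖⁻¹)) -
        C * (g q.1 * f q.2 * ‖q.1 - q.2‖⁻¹)) + C ^ 2 * (g q.1 * g q.2 * ‖q.1 - q.2‖⁻¹) := by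
    funext q
    simp only [hh]
    ring
  have ihh : Integrable (fun q : E3 × E3 => h q.1 * h q.2 * ‖q.1 - q.2‖⁻¹)
      (volume.prod volume) := by
    rw [hexp]
    exact ((iff'.sub (ifg.const_mul C)).sub (igf.const_mul C)).add (igg.const_mul (C ^ 2))
  have hDh : coulombEnergy h h = coulombEnergy f f - C * coulombEnergy f g -
      C * coulombEnergy g f + C ^ 2 * coulombEnergy g g := by
    simp only [coulombEnergy]
    rw [← integral_prod _ ihh, ← integral_prod _ iff', ← integral_prod _ ifg,
      ← integral_prod _ igf, ← integral_prod _ igg, hexp,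
      integral_add, integral_sub, integral_sub, integral_const_mul, integral_const_mul,
      integral_const_mul]
    exacts [iff', ifg.const_mul C, iff'.sub (ifg.const_mul C), igf.const_mul C,
      (iff'.sub (ifg.const_mul C)).sub (igf.const_mul C), igg.const_mul (C ^ 2)]
  have hzero : coulombEnergy h h = 0 := by
    have hff' : coulombEnergy f f = C ^ 2 * coulombEnergy g g := by
      rw [hC, div_pow, heq]
      field_simp
    have hfg' : coulombEnergy f g = C * coulombEnergy g g := by
      rw [hC, div_mul_cancel₀ _ hgpos]
    rw [hDh, hsymm, hff', hfg']
    ring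
  refine ⟨C, ?_⟩
  filter_upwards [ae_eq_zero_of_coulombEnergy_eq_zero h hm
    ((coulombFinite_iff hm hm).2 ihh) hzero] with x hx
  exact sub_eq_zero.1 hx
end

section
/- Let f : ℝ³ → ℝ be measurable with D(|f|,|f|) < ∞. Then D(f,f) ≥ 0, and D(f,f) = 0 if and only if f = 0 almost everywhere in ℝ³. In other words, the Coulomb kernel |x−y|^{−1} on ℝ³ is positive definite. -/
/-!
The proof uses the layer decomposition of the Coulomb kernel into balls (Fefferman and
de la Llave): there is a constant `C > 0` such that for all `x ≠ y`
`C * ‖x - y‖⁻¹ = ∫₀^∞ ∫ 1_{B(z,r)}(x) 1_{B(z,r)}(y) dz r⁻⁵ dr`.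
The right-hand side is translation and rotation invariant, and the substitution `r = ‖x - y‖ ρ`
shows that it is homogeneous of degree `3 - 5 + 1 = -1`, so only finiteness and positivity of its
value at a unit vector have to be checked (`exists_kernel_const`).

Inserting this into the energy and applying Fubini (`integrable_expanded`, which uses the
finiteness of `D(|f|,|f|)`) gives `C * D(f,f) = ∫₀^∞ ∫ (∫_{B(z,r)} f)² dz r⁻⁵ dr`
(`integral_expanded`), which is nonnegative. If it vanishes, then for almost every `z` the integral
of `f` over `B(z,r)` is zero for almost every `r > 0`. A function of finite energy is locally
integrable, so letting such radii tend to `0`, the Lebesgue differentiation theorem gives `f z = 0`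
for almost every `z`.
-/

open MeasureTheory

namespace CoulombPosDef

open Set Metric Filter Topology ENNReal Pointwise

/-- Euclidean three-space. -/
abbrev E := EuclideanSpace ℝ (Fin 3)

/-! ### The Coulomb kernel as a superposition of balls -/

/-- Volume of the intersection of the closed balls of radius `r` around `x` and `y`, i.e. of the
set of centres `z` for which the ball of radius `r` around `z` contains both points. -/
noncomputable def lens (x y : E) (r : ℝ) : ℝ≥0∞ :=
  volume (closedBall x r ∩ closedBall y r)

/-- The measure `r⁻⁵ dr` on `(0, ∞)`. -/
noncomputable def radial : Measure ℝ :=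
  (volume.restrict (Ioi 0)).withDensity fun r ↦ ENNReal.ofReal (r ^ (-5 : ℝ))

/-- The measure `dz r⁻⁵ dr` on the space of balls, a ball being encoded as the pair
`(centre, radius)`. -/
noncomputable def ballMeasure : Measure (E × ℝ) := (volume : Measure E).prod radial

instance : SFinite radial := by unfold radial; infer_instance

instance : SFinite ballMeasure := by unfold ballMeasure; infer_instance

/-- The set of all closed balls containing the point `x`. -/
def ballsThrough (x : E) : Set (E × ℝ) := {p | dist x p.1 ≤ p.2}

lemma measurableSet_ballsThrough (x : E) : MeasurableSet (ballsThrough x) :=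
  (isClosed_le (by fun_prop) (by fun_prop)).measurableSet

lemma slice_eq (x y : E) (r : ℝ) :
    (fun z ↦ (z, r)) ⁻¹' (ballsThrough x ∩ ballsThrough y)
      = closedBall x r ∩ closedBall y r := by
  ext z
  simp [ballsThrough, dist_comm]

lemma measurable_lens (x y : E) : Measurable (lens x y) := by
  have := measurable_measure_prodMk_right (μ := (volume : Measure E))
    ((measurableSet_ballsThrough x).inter (measurableSet_ballsThrough y))
  simp only [slice_eq] at this
  exact this

lemma measurable_weight : Measurable fun r : ℝ ↦ ENNReal.ofReal (r ^ (-5 : ℝ)) := by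
  fun_prop

lemma measurable_weight_mul_lens (x y : E) :
    Measurable fun r : ℝ ↦ ENNReal.ofReal (r ^ (-5 : ℝ)) * lens x y r :=
  measurable_weight.mul (measurable_lens x y)

lemma ballMeasure_inter (x y : E) :
    ballMeasure (ballsThrough x ∩ ballsThrough y)
      = ∫⁻ r in Ioi 0, ENNReal.ofReal (r ^ (-5 : ℝ)) * lens x y r := by
  rw [ballMeasure, Measure.prod_apply_symm
    ((measurableSet_ballsThrough x).inter (measurableSet_ballsThrough y))]
  simp only [slice_eq]
  change ∫⁻ r, lens x y r ∂radial = _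
  rw [radial, lintegral_withDensity_eq_lintegral_mul _ measurable_weight (measurable_lens x y)]
  rfl

/-- A similarity of ratio `‖x - y‖` carries the pair `(e, 0)` to `(x, y)`; its rotational part is a
reflection. -/
lemma lens_scale {x y e : E} (hxy : x ≠ y) (he : ‖e‖ = 1) (r : ℝ) :
    lens x y (‖x - y‖ * r) = ENNReal.ofReal (‖x - y‖ ^ 3) * lens e 0 r := by
  have hs : 0 < ‖x - y‖ := norm_pos_iff.2 (sub_ne_zero.2 hxy)
  set s := ‖x - y‖ with hs_def
  obtain ⟨R, hR⟩ : ∃ R : E ≃ₗᵢ[ℝ] E, R (s⁻¹ • (x - y)) = e := by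
    refine ⟨_, Submodule.reflection_sub ?_⟩
    rw [norm_smul, he, norm_inv, Real.norm_of_nonneg hs.le, ← hs_def, inv_mul_cancel₀ hs.ne']
  have key : closedBall x (s * r) ∩ closedBall y (s * r)
      = (fun z ↦ z + (-y)) ⁻¹' (s • (R ⁻¹' (closedBall e r ∩ closedBall 0 r))) := by
    ext z
    have h1 : ‖R (s⁻¹ • (z + -y)) - e‖ = s⁻¹ * ‖z - x‖ := by
      rw [← hR, ← map_sub, R.norm_map, ← smul_sub, norm_smul, norm_inv,
        Real.norm_of_nonneg hs.le]
      congr 2; abel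
    have h2 : ‖R (s⁻¹ • (z + -y))‖ = s⁻¹ * ‖z - y‖ := by
      rw [R.norm_map, norm_smul, norm_inv, Real.norm_of_nonneg hs.le, sub_eq_add_neg]
    rw [mem_preimage, mem_smul_set_iff_inv_smul_mem₀ hs.ne', mem_preimage, mem_inter_iff,
      mem_inter_iff, mem_closedBall, mem_closedBall, mem_closedBall, mem_closedBall,
      dist_zero_right, dist_eq_norm, dist_eq_norm, dist_eq_norm, h1, h2,
      inv_mul_le_iff₀ hs, inv_mul_le_iff₀ hs]
  rw [lens, key, measure_preimage_add_right, Measure.addHaar_smul,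
    R.measurePreserving.measure_preimage
      (measurableSet_closedBall.inter measurableSet_closedBall).nullMeasurableSet, lens]
  simp [abs_of_pos hs]

/-- Homogeneity: the weight `r⁻⁵`, the volume of the lens and `dr` contribute the exponents `-5`, `3`
and `1`. -/
lemma ballMeasure_inter_scale {x y e : E} (hxy : x ≠ y) (he : ‖e‖ = 1) :
    ballMeasure (ballsThrough x ∩ ballsThrough y)
      = ENNReal.ofReal ‖x - y‖⁻¹ * ballMeasure (ballsThrough e ∩ ballsThrough 0) := by
  have hs : 0 < ‖x - y‖ := norm_pos_iff.2 (sub_ne_zero.2 hxy)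
  rw [ballMeasure_inter, ballMeasure_inter]
  have himg : (fun r ↦ ‖x - y‖ * r) '' Ioi 0 = Ioi 0 := by
    rw [image_mul_left_Ioi hs, mul_zero]
  conv_lhs => rw [← himg]
  rw [lintegral_image_eq_lintegral_abs_deriv_mul measurableSet_Ioi
    (f' := fun _ ↦ ‖x - y‖)
    (fun r _ ↦ by simpa using ((hasDerivAt_id r).const_mul ‖x - y‖).hasDerivWithinAt)
    (mul_right_injective₀ hs.ne').injOn,
    ← lintegral_const_mul _ (measurable_weight_mul_lens e 0)]
  refine setLIntegral_congr_fun measurableSet_Ioi fun r hr ↦ ?_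
  have hr : 0 < r := hr
  simp only [lens_scale hxy he, abs_of_pos hs]
  rw [← mul_assoc, ← mul_assoc, ← mul_assoc, ← ENNReal.ofReal_mul (by positivity),
    ← ENNReal.ofReal_mul (by positivity), ← ENNReal.ofReal_mul (by positivity)]
  congr 2
  rw [Real.mul_rpow hs.le hr.le]
  have : ‖x - y‖ ^ (-5 : ℝ) = (‖x - y‖ ^ 5)⁻¹ := by
    rw [Real.rpow_neg hs.le]; norm_cast
  rw [this]
  field_simp

/-- The lens is empty for `r < 1 / 2`, and for larger `r` the integrand is at most a constant times
`r⁻²`. -/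
lemma ballMeasure_unit_lt_top {e : E} (he : ‖e‖ = 1) :
    ballMeasure (ballsThrough e ∩ ballsThrough 0) < ∞ := by
  rw [ballMeasure_inter]
  have hbound : ∀ r ∈ Ioi (0 : ℝ), ENNReal.ofReal (r ^ (-5 : ℝ)) * lens e 0 r
      ≤ (Ioi (1 / 4 : ℝ)).indicator
        (fun r ↦ ENNReal.ofReal (r ^ (-2 : ℝ)) * volume (ball (0 : E) 1)) r := by
    intro r hr
    have hr : 0 < r := hr
    by_cases h : r ∈ Ioi (1 / 4 : ℝ)
    · rw [indicator_of_mem h]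
      calc _ ≤ ENNReal.ofReal (r ^ (-5 : ℝ)) * volume (closedBall (0 : E) r) := by
            gcongr; exact measure_mono inter_subset_right
        _ = _ := by
            rw [Measure.addHaar_closedBall _ _ hr.le, ← mul_assoc,
              ← ENNReal.ofReal_mul (by positivity), finrank_euclideanSpace_fin,
              ← Real.rpow_natCast, ← Real.rpow_add hr]
            norm_num
    · have : closedBall e r ∩ closedBall 0 r = ∅ := by
        refine (closedBall_disjoint_closedBall ?_).inter_eq
        rw [dist_zero_right, he]
        have : r ≤ 1 / 4 := not_lt.1 h
        linarith
      simp [lens, this]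
  refine (setLIntegral_mono' measurableSet_Ioi hbound).trans_lt ?_
  refine (setLIntegral_le_lintegral _ _).trans_lt ?_
  rw [lintegral_indicator measurableSet_Ioi, lintegral_mul_const _ (by fun_prop)]
  refine ENNReal.mul_lt_top ?_ measure_ball_lt_top
  exact (integrableOn_Ioi_rpow_of_lt (by norm_num : (-2 : ℝ) < -1)
    (by norm_num : (0 : ℝ) < 1 / 4)).lintegral_lt_top

/-- For `r > 1` the lens contains the ball of radius `r - 1` around the origin. -/
lemma ballMeasure_unit_pos {e : E} (he : ‖e‖ = 1) :
    0 < ballMeasure (ballsThrough e ∩ ballsThrough 0) := by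
  rw [ballMeasure_inter, setLIntegral_pos_iff (measurable_weight_mul_lens e 0)]
  refine lt_of_lt_of_le ?_ (measure_mono (s := Ioi (1 : ℝ)) ?_)
  · simp
  · intro r hr
    have hr : 1 < r := hr
    have hr0 : 0 < r := by linarith
    refine ⟨mul_ne_zero ?_ ?_, hr0⟩
    · exact (ENNReal.ofReal_pos.2 (by positivity)).ne'
    · refine ((measure_ball_pos volume (0 : E) (sub_pos.2 hr)).trans_le (measure_mono ?_)).ne'
      intro z hz
      rw [mem_ball_zero_iff] at hz
      refine ⟨?_, ?_⟩
      · rw [mem_closedBall, dist_eq_norm]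
        linarith [norm_sub_le z e]
      · rw [mem_closedBall_zero_iff]; linarith

/-- The Fefferman–de la Llave formula. The points must differ: on the diagonal the left-hand side is
infinite, while `‖x - x‖⁻¹ = 0` by convention. -/
lemma exists_kernel_const : ∃ C : ℝ, 0 < C ∧ ∀ x y : E, x ≠ y →
    ballMeasure (ballsThrough x ∩ ballsThrough y) = ENNReal.ofReal (C * ‖x - y‖⁻¹) := by
  obtain ⟨e, he⟩ := exists_norm_eq E zero_le_one
  refine ⟨(ballMeasure (ballsThrough e ∩ ballsThrough 0)).toReal,
    ENNReal.toReal_pos (ballMeasure_unit_pos he).ne' (ballMeasure_unit_lt_top he).ne,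
    fun x y hxy ↦ ?_⟩
  rw [ballMeasure_inter_scale hxy he, mul_comm, ENNReal.ofReal_mul ENNReal.toReal_nonneg,
    ENNReal.ofReal_toReal (ballMeasure_unit_lt_top he).ne]

/-! ### The energy as an integral of squares -/

/-- Equals `1` if the ball `p` contains `x`, and `0` otherwise. -/
noncomputable def inBall (x : E) (p : E × ℝ) : ℝ := (ballsThrough x).indicator 1 p

lemma measurable_inBall : Measurable fun q : E × (E × ℝ) ↦ inBall q.1 q.2 := by
  have hS : MeasurableSet {q : E × (E × ℝ) | dist q.1 q.2.1 ≤ q.2.2} :=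
    (isClosed_le (by fun_prop) (by fun_prop)).measurableSet
  exact (measurable_const (a := (1 : ℝ))).indicator hS

lemma inBall_mul (x y : E) (p : E × ℝ) :
    inBall x p * inBall y p = (ballsThrough x ∩ ballsThrough y).indicator 1 p := by
  rw [inter_indicator_one]; rfl

lemma inBall_center (z : E) (r : ℝ) : (fun x ↦ inBall x (z, r)) = (closedBall z r).indicator 1 := by
  ext x
  by_cases h : dist x z ≤ r <;> simp [inBall, ballsThrough, indicator, h]

/-- The integrand of the energy after the kernel has been expanded into balls, as a function of
`((x, y), ball)`. -/
noncomputable def expanded (f : E → ℝ) (q : (E × E) × (E × ℝ)) : ℝ :=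
  (f q.1.1 * inBall q.1.1 q.2) * (f q.1.2 * inBall q.1.2 q.2)

lemma expanded_eq (f : E → ℝ) (x y : E) (p : E × ℝ) :
    expanded f ((x, y), p)
      = f x * f y * (ballsThrough x ∩ ballsThrough y).indicator 1 p := by
  rw [← inBall_mul, expanded]; ring

lemma measurable_expanded {f : E → ℝ} (hf : Measurable f) : Measurable (expanded f) := by
  have h1 : Measurable fun q : (E × E) × (E × ℝ) ↦ inBall q.1.1 q.2 :=
    measurable_inBall.comp (g := fun q : E × (E × ℝ) ↦ inBall q.1 q.2)
      (f := fun q : (E × E) × (E × ℝ) ↦ (q.1.1, q.2)) (by fun_prop)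
  have h2 : Measurable fun q : (E × E) × (E × ℝ) ↦ inBall q.1.2 q.2 :=
    measurable_inBall.comp (g := fun q : E × (E × ℝ) ↦ inBall q.1 q.2)
      (f := fun q : (E × E) × (E × ℝ) ↦ (q.1.2, q.2)) (by fun_prop)
  unfold expanded
  fun_prop

lemma ae_ne_point (x : E) : ∀ᵐ y : E, x ≠ y := by
  have : ({x}ᶜ : Set E) ∈ ae volume := compl_mem_ae_iff.2 (measure_singleton x)
  filter_upwards [this] with y hy h
  exact hy h.symm

lemma integrable_expanded {f : E → ℝ} (hf : Measurable f) (hff : CoulombFinite f f) :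
    Integrable (expanded f) ((volume.prod volume).prod ballMeasure) := by
  obtain ⟨C, hC, hker⟩ := exists_kernel_const
  have hm := (measurable_expanded hf).enorm
  refine ⟨(measurable_expanded hf).aestronglyMeasurable, ?_⟩
  rw [HasFiniteIntegral, lintegral_prod _ hm.aemeasurable,
    lintegral_prod _ hm.lintegral_prod_right'.aemeasurable]
  have hinner : ∀ x : E, ∫⁻ y : E, ∫⁻ p, ‖expanded f ((x, y), p)‖ₑ ∂ballMeasure
      = ENNReal.ofReal C * ∫⁻ y : E, ENNReal.ofReal (|f x| * |f y| * ‖x - y‖⁻¹) := by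
    intro x
    rw [← lintegral_const_mul _ (by fun_prop)]
    refine lintegral_congr_ae ?_
    filter_upwards [ae_ne_point x] with y hy
    have hS := (measurableSet_ballsThrough x).inter (measurableSet_ballsThrough y)
    have : ∀ p, ‖expanded f ((x, y), p)‖ₑ = ENNReal.ofReal (|f x| * |f y|) *
        (ballsThrough x ∩ ballsThrough y).indicator 1 p := by
      intro p
      rw [expanded_eq, ← abs_mul, enorm_mul, Real.enorm_eq_ofReal_abs (f x * f y)]
      congr 1
      by_cases h : p ∈ ballsThrough x ∩ ballsThrough y <;> simp [h]
    simp only [this]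
    rw [lintegral_const_mul _ (measurable_one.indicator hS), lintegral_indicator_one hS,
      hker x y hy, ← ENNReal.ofReal_mul (by positivity), ← ENNReal.ofReal_mul hC.le]
    congr 1; ring
  simp only [hinner]
  rw [lintegral_const_mul' _ _ ENNReal.ofReal_ne_top]
  exact ENNReal.mul_lt_top ENNReal.ofReal_lt_top hff

lemma integral_expanded {f : E → ℝ} (hf : Measurable f) (hff : CoulombFinite f f) :
    ∃ C : ℝ, 0 < C ∧
      C * coulombEnergy f f = ∫ p, (∫ x, f x * inBall x p) ^ 2 ∂ballMeasure := by
  obtain ⟨C, hC, hker⟩ := exists_kernel_const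
  have hint := integrable_expanded hf hff
  refine ⟨C, hC, ?_⟩
  trans ∫ q, expanded f q ∂((volume.prod volume).prod ballMeasure)
  · rw [integral_prod _ hint, integral_prod _ hint.integral_prod_left, coulombEnergy,
      ← integral_const_mul]
    refine integral_congr_ae (Eventually.of_forall fun x ↦ ?_)
    dsimp only
    rw [← integral_const_mul]
    refine integral_congr_ae ?_
    filter_upwards [ae_ne_point x] with y hy
    have hS := (measurableSet_ballsThrough x).inter (measurableSet_ballsThrough y)
    simp only [expanded_eq]
    rw [integral_const_mul, integral_indicator_one hS, Measure.real, hker x y hy,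
      ENNReal.toReal_ofReal (by positivity)]
    ring
  · rw [integral_prod_symm _ hint]
    refine integral_congr_ae (Eventually.of_forall fun p ↦ ?_)
    simp only [expanded]
    rw [integral_prod_mul (fun x ↦ f x * inBall x p) (fun x ↦ f x * inBall x p), sq]

/-- Without this integrability, a vanishing integral of the squares would carry no information. -/
lemma integrable_sq_ball {f : E → ℝ} (hf : Measurable f) (hff : CoulombFinite f f) :
    Integrable (fun p ↦ (∫ x, f x * inBall x p) ^ 2) ballMeasure := by
  refine (integrable_expanded hf hff).integral_prod_right.congr
    (Eventually.of_forall fun p ↦ ?_)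
  simp only [expanded]
  rw [integral_prod_mul (fun x ↦ f x * inBall x p) (fun x ↦ f x * inBall x p), sq]

/-! ### The case of zero energy -/

lemma frequently_of_ae_radial {P : ℝ → Prop} (h : ∀ᵐ r ∂radial, P r) :
    ∃ᶠ r in 𝓝[>] (0 : ℝ), P r := by
  have h' : ∀ᵐ r : ℝ, 0 < r → P r := by
    rw [radial, ae_withDensity_iff measurable_weight] at h
    filter_upwards [(ae_restrict_iff' measurableSet_Ioi).1 h] with r hr hr0
    exact hr hr0 (ENNReal.ofReal_pos.2 (Real.rpow_pos_of_pos hr0 _)).ne'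
  intro hn
  obtain ⟨ε, hε, hsub⟩ := mem_nhdsGT_iff_exists_Ioo_subset.1 hn
  have hnull : volume (Ioo 0 ε) = 0 := measure_mono_null
    (t := {r | ¬ (0 < r → P r)}) (fun r hr hP ↦ hsub hr (hP hr.1)) (ae_iff.1 h')
  simp only [Real.volume_Ioo, sub_zero, ENNReal.ofReal_eq_zero] at hnull
  exact absurd hε (not_lt.2 hnull)

/-- If `f x ≠ 0` and the inner energy integral at `x` is finite, then `f` is integrable on every ball
around `x`, since `‖x - y‖⁻¹` is bounded below there; such an `x` exists unless `f = 0` a.e. -/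
lemma locallyIntegrable {f : E → ℝ} (hf : Measurable f) (hff : CoulombFinite f f) :
    LocallyIntegrable f := by
  by_cases h0 : f =ᵐ[volume] 0
  · exact (integrable_zero E ℝ volume).congr h0.symm |>.locallyIntegrable
  have hae : ∀ᵐ x, ∫⁻ y, ENNReal.ofReal (|f x| * |f y| * ‖x - y‖⁻¹) < ∞ :=
    ae_lt_top (by fun_prop) hff.ne
  obtain ⟨x, hx0, hx⟩ := ((not_eventually.1 h0).and_eventually hae).exists
  have hx0 : 0 < |f x| := abs_pos.2 hx0
  rw [locallyIntegrable_iff]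
  intro K hK
  obtain ⟨R, hR⟩ := hK.isBounded.subset_closedBall x
  refine IntegrableOn.mono_set ?_ hR
  refine ⟨hf.aestronglyMeasurable, ?_⟩
  set S : ℝ := max R 1
  have hS : 0 < S := lt_max_of_lt_right one_pos
  -- On the ball, `S / |f x|` times the integrand dominates `|f y|`, except at `y = x`.
  have hle : ∫⁻ y in closedBall x R, ‖f y‖ₑ ≤ ∫⁻ y, ENNReal.ofReal (S / |f x|) *
      ENNReal.ofReal (|f x| * |f y| * ‖x - y‖⁻¹) := by
    rw [← lintegral_indicator measurableSet_closedBall]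
    refine lintegral_mono_ae ?_
    filter_upwards [ae_ne_point x] with y hy
    by_cases hyR : y ∈ closedBall x R
    · rw [indicator_of_mem hyR, Real.enorm_eq_ofReal_abs, ← ENNReal.ofReal_mul (by positivity)]
      refine ENNReal.ofReal_le_ofReal ?_
      have hd : 0 < ‖x - y‖ := norm_pos_iff.2 (sub_ne_zero.2 hy)
      have hd' : ‖x - y‖ ≤ S := by
        rw [← dist_eq_norm, dist_comm]
        exact (mem_closedBall.1 hyR).trans (le_max_left _ _)
      have : S / |f x| * (|f x| * |f y| * ‖x - y‖⁻¹) = |f y| * (S / ‖x - y‖) := by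
        field_simp
      rw [this]
      exact le_mul_of_one_le_right (abs_nonneg _) ((one_le_div hd).2 hd')
    · simp [indicator_of_notMem hyR]
  refine hle.trans_lt ?_
  rw [lintegral_const_mul' _ _ ENNReal.ofReal_ne_top]
  exact ENNReal.mul_lt_top ENNReal.ofReal_lt_top hx

end CoulombPosDef

open CoulombPosDef

/-- Positive definiteness of the Coulomb kernel `|x-y|⁻¹` on `ℝ³`: `D(f,f) ≥ 0`, with
equality if and only if `f = 0` almost everywhere. -/
theorem coulomb_posdef (f : EuclideanSpace ℝ (Fin 3) → ℝ)
    (hf : Measurable f) (hff : CoulombFinite f f) :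
    0 ≤ coulombEnergy f f ∧ (coulombEnergy f f = 0 ↔ f =ᵐ[volume] 0) := by
  obtain ⟨C, hC, hrep⟩ := integral_expanded hf hff
  refine ⟨?_, fun h0 ↦ ?_, fun h0 ↦ ?_⟩
  · refine nonneg_of_mul_nonneg_right ?_ hC
    rw [hrep]
    exact integral_nonneg fun p ↦ sq_nonneg _
  · rw [h0, mul_zero, eq_comm, integral_eq_zero_iff_of_nonneg (fun p ↦ sq_nonneg _)
      (integrable_sq_ball hf hff)] at hrep
    filter_upwards [Measure.ae_ae_of_ae_prod hrep,
      (Besicovitch.vitaliFamily volume).ae_tendsto_average (locallyIntegrable hf hff)]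
      with z hz hlim
    have hlim' := hlim.comp (Besicovitch.tendsto_filterAt volume z)
    by_contra hne
    -- Averages over small balls would be nonzero, yet they vanish for arbitrarily small radii.
    have hev := hlim'.eventually_ne hne
    obtain ⟨r, hr, hr'⟩ := ((frequently_of_ae_radial hz).and_eventually hev).exists
    refine hr' ?_
    have hball : ∫ x in Metric.closedBall z r, f x = ∫ x, f x * inBall x (z, r) := by
      rw [← integral_indicator measurableSet_closedBall]
      refine integral_congr_ae (Filter.Eventually.of_forall fun x ↦ ?_)
      have hx : inBall x (z, r) = (Metric.closedBall z r).indicator 1 x :=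
        congrFun (inBall_center z r) x
      simp only [hx]
      by_cases h : x ∈ Metric.closedBall z r <;> simp [Set.indicator, h]
    have : ∫ x, f x * inBall x (z, r) = 0 := by simpa using hr
    simp [setAverage_eq, hball, this]
  · have : ∀ᵐ x, ∫ y, f x * f y * ‖x - y‖⁻¹ = 0 := by
      filter_upwards [h0] with x hx
      simp [hx]
    simpa [coulombEnergy] using integral_congr_ae this
end

section
/- Let f, g : ℝ³ → ℝ be measurable with D(|f|,|f|) < ∞ and D(|g|,|g|) < ∞. Then D(|f+g|,|f+g|) < ∞, and moreover D(f+g, f+g) ≤ D(f,f) + D(g,g) + 2·√(D(f,f)·D(g,g)); consequently the set 𝒜(ℝ³) = { f ∈ L¹_loc(ℝ³) : D(|f|,|f|) < ∞ } is closed under addition and scalar multiplication, i.e. it is a linear subspace of L¹_loc(ℝ³). -/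
/-!
The Coulomb kernel is a superposition of products of Gaussians,
`‖x - y‖⁻¹ = ∫₀^∞ ∫_{ℝ³} K(x, t, z) K(y, t, z) dz dt` with
`K(x, t, z) = (√2 / π) √t exp (-t ‖x - z‖²)`  (`lintegral_coulombFactor`). Hence, writing
`U_f(t, z) = ∫ f(x) K(x, t, z) dx`, Tonelli's theorem gives
`D(|f|, |g|) = ∫ U_{|f|} U_{|g|} ≤ ∫ U_{|f|}² + ∫ U_{|g|}² = D(|f|, |f|) + D(|g|, |g|)`, so the mixed
energies are finite (`CoulombFinite.mixed`), and with them the energy of `f + g`.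

All the double integrals are therefore absolutely convergent, `D` is a symmetric bilinear form on
functions of finite energy, and Fubini's theorem gives `D(f, f) = ∫ U_f² ≥ 0`
(`coulombEnergy_self_nonneg`). The quadratic polynomial `s ↦ D(s f + g, s f + g)` is nonnegative, so
its discriminant is nonpositive: this is the Cauchy–Schwarz inequality `D(f, g)² ≤ D(f, f) D(g, g)`,
from which the bound on `D(f + g, f + g)` follows by expansion.
-/

open MeasureTheory

/-! ### Gaussian decomposition of the Coulomb kernel -/

/-- The Gaussian factor `K(x, (t, z)) = (√2 / π) √t exp (-t ‖x - z‖²)` of the Coulomb kernel. -/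
noncomputable def coulombFactor (x : EuclideanSpace ℝ (Fin 3))
    (m : ℝ × EuclideanSpace ℝ (Fin 3)) : ℝ :=
  √2 / Real.pi * √m.1 * Real.exp (-m.1 * ‖x - m.2‖ ^ 2)

/-- The measure `dt dz` on the parameter space `(0, ∞) × ℝ³` of the Gaussians. -/
noncomputable def scaleMeasure : Measure (ℝ × EuclideanSpace ℝ (Fin 3)) :=
  (volume.restrict (Set.Ioi 0)).prod volume

instance : SFinite scaleMeasure := by unfold scaleMeasure; infer_instance

lemma coulombFactor_nonneg (x : EuclideanSpace ℝ (Fin 3)) (m : ℝ × EuclideanSpace ℝ (Fin 3)) :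
    0 ≤ coulombFactor x m := by
  unfold coulombFactor; positivity

lemma measurable_coulombFactor : Measurable (Function.uncurry coulombFactor) := by
  unfold coulombFactor Function.uncurry; fun_prop

lemma measurable_coulombFactor_left (m : ℝ × EuclideanSpace ℝ (Fin 3)) :
    Measurable (fun x => coulombFactor x m) := by
  unfold coulombFactor; fun_prop

/-- The product of two Gaussians is a Gaussian centred at the midpoint. -/
lemma integral_exp_mul_exp (x y : EuclideanSpace ℝ (Fin 3)) {t : ℝ} (ht : 0 < t) :
    ∫ z, Real.exp (-t * ‖x - z‖ ^ 2) * Real.exp (-t * ‖y - z‖ ^ 2) =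
      Real.exp (-(‖x - y‖ ^ 2 / 2 * t)) * (Real.pi / (2 * t)) ^ (3 / 2 : ℝ) := by
  have h1 : ∀ z, Real.exp (-t * ‖x - z‖ ^ 2) * Real.exp (-t * ‖y - z‖ ^ 2) =
      Real.exp (-(‖x - y‖ ^ 2 / 2 * t)) *
        Real.exp (-(2 * t) * ‖z - (1 / 2 : ℝ) • (x + y)‖ ^ 2) := by
    intro z
    rw [← Real.exp_add, ← Real.exp_add]
    congr 1
    have := parallelogram_law_with_norm ℝ (x - z) (y - z)
    have e1 : x - z - (y - z) = x - y := by abel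
    have e2 : x - z + (y - z) = (-2 : ℝ) • (z - (1 / 2 : ℝ) • (x + y)) := by
      module
    rw [e1, e2, norm_smul] at this
    rw [norm_neg, Real.norm_ofNat] at this
    linear_combination (t / 2) * this
  simp_rw [h1]
  rw [integral_const_mul, integral_sub_right_eq_self
    (fun z : EuclideanSpace ℝ (Fin 3) => Real.exp (-(2 * t) * ‖z‖ ^ 2)),
    GaussianFourier.integral_rexp_neg_mul_sq_norm (by positivity)]
  simp

lemma integral_scale {r : ℝ} (hr : 0 < r) :
    ∫ t in Set.Ioi (0 : ℝ), 2 / Real.pi ^ 2 * t *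
      (Real.exp (-(r ^ 2 / 2 * t)) * (Real.pi / (2 * t)) ^ (3 / 2 : ℝ)) = r⁻¹ := by
  have hpi := Real.pi_pos
  have h1 : ∀ t ∈ Set.Ioi (0 : ℝ), 2 / Real.pi ^ 2 * t *
      (Real.exp (-(r ^ 2 / 2 * t)) * (Real.pi / (2 * t)) ^ (3 / 2 : ℝ)) =
      2 / Real.pi ^ 2 * (Real.pi / 2) ^ (3 / 2 : ℝ) *
        (t ^ ((1 / 2 : ℝ) - 1) * Real.exp (-(r ^ 2 / 2 * t))) := by
    intro t ht
    have ht : 0 < t := ht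
    have e : t ^ ((1 / 2 : ℝ) - 1) = t * (t ^ (3 / 2 : ℝ))⁻¹ := by
      rw [← Real.rpow_neg ht.le, ← Real.rpow_one_add' ht.le (by norm_num)]
      norm_num
    rw [e, ← div_div, Real.div_rpow (by positivity) ht.le]
    ring
  rw [setIntegral_congr_fun measurableSet_Ioi h1, integral_const_mul,
    Real.integral_rpow_mul_exp_neg_mul_Ioi (by norm_num) (by positivity), Real.Gamma_one_half_eq]
  have e1 : (Real.pi / 2) ^ (3 / 2 : ℝ) = Real.pi / 2 * (√Real.pi / √2) := by
    rw [← Real.sqrt_div hpi.le, Real.sqrt_eq_rpow, ← Real.rpow_one_add' (by positivity)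
      (by norm_num)]
    norm_num
  have e2 : (1 / (r ^ 2 / 2)) ^ (1 / 2 : ℝ) = √2 / r := by
    rw [← Real.sqrt_eq_rpow, one_div_div, Real.sqrt_div (by norm_num), Real.sqrt_sq hr.le]
  rw [e1, e2]
  have := Real.sq_sqrt hpi.le
  field_simp
  linear_combination this

/-- The Coulomb kernel as a superposition of products of Gaussians. At `x = y` the left side is
infinite while `‖x - y‖⁻¹ = 0`, so that the diagonal has to be excluded. -/
lemma lintegral_coulombFactor {x y : EuclideanSpace ℝ (Fin 3)} (hxy : x ≠ y) :
    ∫⁻ m, ENNReal.ofReal (coulombFactor x m * coulombFactor y m) ∂scaleMeasure =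
      ENNReal.ofReal ‖x - y‖⁻¹ := by
  have hr : 0 < ‖x - y‖ := norm_pos_iff.2 (sub_ne_zero.2 hxy)
  have hpi := Real.pi_pos
  have hm : Measurable fun m => ENNReal.ofReal (coulombFactor x m * coulombFactor y m) := by
    unfold coulombFactor; fun_prop
  rw [scaleMeasure, lintegral_prod _ hm.aemeasurable]
  have h1 : ∀ t ∈ Set.Ioi (0 : ℝ),
      ∫⁻ z, ENNReal.ofReal (coulombFactor x (t, z) * coulombFactor y (t, z)) =
      ENNReal.ofReal (2 / Real.pi ^ 2 * t *
      (Real.exp (-(‖x - y‖ ^ 2 / 2 * t)) * (Real.pi / (2 * t)) ^ (3 / 2 : ℝ))) := by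
    intro t ht
    have ht : 0 < t := ht
    have e : ∀ z, coulombFactor x (t, z) * coulombFactor y (t, z) = 2 / Real.pi ^ 2 * t *
        (Real.exp (-t * ‖x - z‖ ^ 2) * Real.exp (-t * ‖y - z‖ ^ 2)) := by
      intro z
      unfold coulombFactor
      have a1 := Real.sq_sqrt ht.le
      have a2 := Real.sq_sqrt (show (0 : ℝ) ≤ 2 by norm_num)
      calc _ = √2 ^ 2 / Real.pi ^ 2 * √t ^ 2 *
            (Real.exp (-t * ‖x - z‖ ^ 2) * Real.exp (-t * ‖y - z‖ ^ 2)) := by ring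
        _ = _ := by rw [a1, a2]
    simp_rw [e]
    rw [← integral_exp_mul_exp x y ht, ← integral_const_mul]
    refine (ofReal_integral_eq_lintegral_ofReal (Integrable.const_mul ?_ _)
      (.of_forall fun z => by positivity)).symm
    -- the integral is nonzero, hence not the junk value of a non-integrable function
    refine Integrable.of_integral_ne_zero ?_
    rw [integral_exp_mul_exp x y ht]
    positivity
  rw [setLIntegral_congr_fun measurableSet_Ioi h1, ← integral_scale hr]
  refine (ofReal_integral_eq_lintegral_ofReal (Integrable.of_integral_ne_zero ?_) ?_).symm
  · rw [integral_scale hr]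
    positivity
  · refine (ae_restrict_iff' measurableSet_Ioi).2 (.of_forall fun t ht => ?_)
    have ht : 0 < t := ht
    simp only [Pi.zero_apply]
    positivity

lemma integral_coulombFactor {x y : EuclideanSpace ℝ (Fin 3)} (hxy : x ≠ y) :
    ∫ m, coulombFactor x m * coulombFactor y m ∂scaleMeasure = ‖x - y‖⁻¹ := by
  rw [integral_eq_lintegral_of_nonneg_ae, lintegral_coulombFactor hxy,
    ENNReal.toReal_ofReal (by positivity)]
  · exact .of_forall fun m => mul_nonneg (coulombFactor_nonneg x m) (coulombFactor_nonneg y m)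
  · refine Measurable.aestronglyMeasurable ?_
    unfold coulombFactor; fun_prop

lemma ae_offDiag : ∀ᵐ p : EuclideanSpace ℝ (Fin 3) × EuclideanSpace ℝ (Fin 3)
    ∂(volume.prod volume), p.1 ≠ p.2 := by
  refine (Measure.ae_prod_iff_ae_ae
    (measurableSet_eq_fun measurable_fst measurable_snd).compl).2 (.of_forall fun x => ?_)
  filter_upwards [(Set.finite_singleton x).countable.ae_notMem volume] with y hy h
  exact hy h.symm

/-! ### Finiteness of mixed energies -/

/-- The Gaussian potential `U_{|f|}` of `|f|`. -/
noncomputable def absPotential (f : EuclideanSpace ℝ (Fin 3) → ℝ)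
    (m : ℝ × EuclideanSpace ℝ (Fin 3)) : ENNReal :=
  ∫⁻ x, ENNReal.ofReal (|f x| * coulombFactor x m)

section

variable {f g : EuclideanSpace ℝ (Fin 3) → ℝ}

lemma measurable_absPotential (hf : Measurable f) : Measurable (absPotential f) := by
  unfold absPotential
  refine Measurable.lintegral_prod_left' (f := fun p : _ × _ =>
    ENNReal.ofReal (|f p.1| * coulombFactor p.1 p.2)) ?_
  have := measurable_coulombFactor
  unfold Function.uncurry at this
  fun_prop

lemma lintegral_lintegral_coulomb (hf : Measurable f) (hg : Measurable g) :
    ∫⁻ x, ∫⁻ y, ENNReal.ofReal (|f x| * |g y| * ‖x - y‖⁻¹) =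
      ∫⁻ p : EuclideanSpace ℝ (Fin 3) × EuclideanSpace ℝ (Fin 3),
        ENNReal.ofReal (|f p.1| * |g p.2| * ‖p.1 - p.2‖⁻¹) ∂(volume.prod volume) := by
  rw [lintegral_prod]
  fun_prop

lemma lintegral_factor (hf : Measurable f) (hg : Measurable g) :
    ∫⁻ p : EuclideanSpace ℝ (Fin 3) × EuclideanSpace ℝ (Fin 3),
        (∫⁻ m, ENNReal.ofReal (|f p.1| * |g p.2| * (coulombFactor p.1 m * coulombFactor p.2 m))
          ∂scaleMeasure) ∂(volume.prod volume) =
    ∫⁻ x, ∫⁻ y, ENNReal.ofReal (|f x| * |g y| * ‖x - y‖⁻¹) := by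
  rw [lintegral_lintegral_coulomb hf hg]
  refine lintegral_congr_ae ?_
  filter_upwards [ae_offDiag] with p hp
  simp_rw [ENNReal.ofReal_mul (mul_nonneg (abs_nonneg (f p.1)) (abs_nonneg (g p.2)))]
  rw [lintegral_const_mul' _ _ ENNReal.ofReal_ne_top, lintegral_coulombFactor hp]

lemma measurable_factor (hf : Measurable f) (hg : Measurable g) :
    Measurable fun q : (EuclideanSpace ℝ (Fin 3) × EuclideanSpace ℝ (Fin 3)) ×
      (ℝ × EuclideanSpace ℝ (Fin 3)) =>
        f q.1.1 * g q.1.2 * (coulombFactor q.1.1 q.2 * coulombFactor q.1.2 q.2) := by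
  unfold coulombFactor
  fun_prop

/-- `D(|f|, |g|) = ∫ U_{|f|} U_{|g|}`. -/
lemma lintegral_coulomb_eq (hf : Measurable f) (hg : Measurable g) :
    ∫⁻ x, ∫⁻ y, ENNReal.ofReal (|f x| * |g y| * ‖x - y‖⁻¹) =
      ∫⁻ m, absPotential f m * absPotential g m ∂scaleMeasure := by
  rw [← lintegral_factor hf hg, lintegral_lintegral_swap]
  · refine lintegral_congr fun m => ?_
    have hK := measurable_coulombFactor_left m
    have e : ∀ p : EuclideanSpace ℝ (Fin 3) × EuclideanSpace ℝ (Fin 3),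
        ENNReal.ofReal (|f p.1| * |g p.2| * (coulombFactor p.1 m * coulombFactor p.2 m)) =
        ENNReal.ofReal (|f p.1| * coulombFactor p.1 m) *
          ENNReal.ofReal (|g p.2| * coulombFactor p.2 m) := by
      intro p
      rw [← ENNReal.ofReal_mul (mul_nonneg (abs_nonneg _) (coulombFactor_nonneg _ _))]
      congr 1
      ring
    simp_rw [e]
    exact lintegral_prod_mul (f := fun x => ENNReal.ofReal (|f x| * coulombFactor x m))
      (g := fun x => ENNReal.ofReal (|g x| * coulombFactor x m))
      (by fun_prop) (by fun_prop)
  · exact (measurable_factor (f := fun x => |f x|) (g := fun x => |g x|)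
      (by fun_prop) (by fun_prop)).ennreal_ofReal.aemeasurable

lemma CoulombFinite.mixed (hf : Measurable f) (hg : Measurable g)
    (hff : CoulombFinite f f) (hgg : CoulombFinite g g) : CoulombFinite f g := by
  unfold CoulombFinite at *
  rw [lintegral_coulomb_eq hf hf] at hff
  rw [lintegral_coulomb_eq hg hg] at hgg
  rw [lintegral_coulomb_eq hf hg]
  have hUf := measurable_absPotential hf
  calc ∫⁻ m, absPotential f m * absPotential g m ∂scaleMeasure
      ≤ ∫⁻ m, (absPotential f m * absPotential f m + absPotential g m * absPotential g m)
          ∂scaleMeasure := by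
        refine lintegral_mono fun m => ?_
        rcases le_total (absPotential f m) (absPotential g m) with hle | hle
        · exact le_add_left (by gcongr)
        · exact le_add_right (by gcongr)
    _ = _ := lintegral_add_left (by fun_prop) _
    _ < ⊤ := ENNReal.add_lt_top.2 ⟨hff, hgg⟩

/-! ### Positivity, bilinearity and the Cauchy–Schwarz inequality -/

lemma CoulombFinite.integrable (hf : Measurable f) (hg : Measurable g) (hfg : CoulombFinite f g) :
    Integrable (fun p : EuclideanSpace ℝ (Fin 3) × EuclideanSpace ℝ (Fin 3) =>
      f p.1 * g p.2 * ‖p.1 - p.2‖⁻¹) (volume.prod volume) := by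
  refine ⟨by fun_prop, ?_⟩
  rw [hasFiniteIntegral_iff_norm]
  unfold CoulombFinite at hfg
  rw [lintegral_lintegral_coulomb hf hg] at hfg
  simpa [abs_mul] using hfg

lemma coulombFinite_of_integrable (hf : Measurable f) (hg : Measurable g)
    (hfg : Integrable (fun p : EuclideanSpace ℝ (Fin 3) × EuclideanSpace ℝ (Fin 3) =>
      f p.1 * g p.2 * ‖p.1 - p.2‖⁻¹) (volume.prod volume)) : CoulombFinite f g := by
  have := hfg.2
  rw [hasFiniteIntegral_iff_norm] at this
  unfold CoulombFinite
  rw [lintegral_lintegral_coulomb hf hg]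
  simpa [abs_mul] using this

lemma coulombEnergy_eq_prod (hf : Measurable f) (hg : Measurable g) (hfg : CoulombFinite f g) :
    coulombEnergy f g = ∫ p : EuclideanSpace ℝ (Fin 3) × EuclideanSpace ℝ (Fin 3),
      f p.1 * g p.2 * ‖p.1 - p.2‖⁻¹ ∂(volume.prod volume) :=
  (integral_prod _ (hfg.integrable hf hg)).symm

/-- Positive semidefiniteness of the Coulomb energy: `D(f, f) = ∫ U_f²`. -/
lemma coulombEnergy_self_nonneg (hf : Measurable f) (hff : CoulombFinite f f) :
    0 ≤ coulombEnergy f f := by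
  have hint : Integrable (Function.uncurry
      fun (p : EuclideanSpace ℝ (Fin 3) × EuclideanSpace ℝ (Fin 3))
        (m : ℝ × EuclideanSpace ℝ (Fin 3)) =>
        f p.1 * f p.2 * (coulombFactor p.1 m * coulombFactor p.2 m))
      ((volume.prod volume).prod scaleMeasure) := by
    have hm := measurable_factor hf hf
    refine ⟨hm.aestronglyMeasurable, ?_⟩
    rw [hasFiniteIntegral_iff_norm]
    refine (lintegral_prod _ hm.norm.ennreal_ofReal.aemeasurable).trans_lt ?_
    unfold CoulombFinite at hff
    rw [← lintegral_factor hf hf] at hff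
    simpa [abs_mul, Function.uncurry, abs_of_nonneg (coulombFactor_nonneg _ _)] using hff
  have key : coulombEnergy f f =
      ∫ m, (∫ x, f x * coulombFactor x m) * (∫ x, f x * coulombFactor x m) ∂scaleMeasure := by
    calc coulombEnergy f f = _ := coulombEnergy_eq_prod hf hf hff
      _ = ∫ p : EuclideanSpace ℝ (Fin 3) × EuclideanSpace ℝ (Fin 3),
          (∫ m, f p.1 * f p.2 * (coulombFactor p.1 m * coulombFactor p.2 m) ∂scaleMeasure)
          ∂(volume.prod volume) := by
        refine integral_congr_ae ?_
        filter_upwards [ae_offDiag] with p hp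
        rw [integral_const_mul, integral_coulombFactor hp]
      _ = _ := by
        rw [integral_integral_swap hint]
        refine integral_congr_ae (.of_forall fun m => ?_)
        simp only
        rw [← integral_prod_mul]
        refine integral_congr_ae (.of_forall fun p => ?_)
        simp only
        ring
  rw [key]
  exact integral_nonneg fun m => mul_self_nonneg _

lemma CoulombFinite.smul (c : ℝ) (hf : Measurable f) (hff : CoulombFinite f f) :
    CoulombFinite (c • f) (c • f) := by
  refine coulombFinite_of_integrable (hf.const_smul c) (hf.const_smul c) ?_
  refine ((hff.integrable hf hf).const_mul (c * c)).congr (.of_forall fun p => ?_)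
  simp only [Pi.smul_apply, smul_eq_mul]
  ring

lemma coulombEnergy_comm (hf : Measurable f) (hg : Measurable g) (hfg : CoulombFinite f g)
    (hgf : CoulombFinite g f) : coulombEnergy f g = coulombEnergy g f := by
  rw [coulombEnergy_eq_prod hf hg hfg, coulombEnergy_eq_prod hg hf hgf,
    ← integral_prod_swap]
  refine integral_congr_ae (.of_forall fun p => ?_)
  simp only [Prod.fst_swap, Prod.snd_swap]
  rw [norm_sub_rev]
  ring

/-- Expansion of the energy of a linear combination `s f + g`, with its finiteness. -/
lemma coulomb_expand (hf : Measurable f) (hg : Measurable g)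
    (hff : CoulombFinite f f) (hgg : CoulombFinite g g) (s : ℝ) :
    CoulombFinite (s • f + g) (s • f + g) ∧
    coulombEnergy (s • f + g) (s • f + g) =
      coulombEnergy f f * (s * s) + 2 * coulombEnergy f g * s + coulombEnergy g g := by
  have hfg := CoulombFinite.mixed hf hg hff hgg
  have hgf := CoulombFinite.mixed hg hf hgg hff
  have hsm : Measurable (s • f + g) := (hf.const_smul s).add hg
  have i1 := (hff.integrable hf hf).const_mul (s * s)
  have i2 := (hfg.integrable hf hg).const_mul s
  have i3 := (hgf.integrable hg hf).const_mul s
  have i4 := hgg.integrable hg hg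
  have e : (fun p : EuclideanSpace ℝ (Fin 3) × EuclideanSpace ℝ (Fin 3) =>
      (s • f + g) p.1 * (s • f + g) p.2 * ‖p.1 - p.2‖⁻¹) = fun p =>
      s * s * (f p.1 * f p.2 * ‖p.1 - p.2‖⁻¹) + s * (f p.1 * g p.2 * ‖p.1 - p.2‖⁻¹) +
        s * (g p.1 * f p.2 * ‖p.1 - p.2‖⁻¹) + g p.1 * g p.2 * ‖p.1 - p.2‖⁻¹ := by
    funext p
    simp only [Pi.add_apply, Pi.smul_apply, smul_eq_mul]
    ring
  have hfin : CoulombFinite (s • f + g) (s • f + g) := by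
    refine coulombFinite_of_integrable hsm hsm ?_
    rw [e]
    exact ((i1.add i2).add i3).add i4
  refine ⟨hfin, ?_⟩
  rw [coulombEnergy_eq_prod hsm hsm hfin, e, integral_add (by exact (i1.add i2).add i3) i4,
    integral_add (by exact i1.add i2) i3, integral_add i1 i2, integral_const_mul, integral_const_mul,
    integral_const_mul, ← coulombEnergy_eq_prod hf hf hff, ← coulombEnergy_eq_prod hf hg hfg,
    ← coulombEnergy_eq_prod hg hf hgf, ← coulombEnergy_eq_prod hg hg hgg,
    coulombEnergy_comm hg hf hgf hfg]
  ring

/-- Cauchy–Schwarz inequality for the Coulomb energy. -/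
lemma coulombEnergy_sq_le (hf : Measurable f) (hg : Measurable g)
    (hff : CoulombFinite f f) (hgg : CoulombFinite g g) :
    coulombEnergy f g ^ 2 ≤ coulombEnergy f f * coulombEnergy g g := by
  have hd := discrim_le_zero (a := coulombEnergy f f) (b := 2 * coulombEnergy f g)
    (c := coulombEnergy g g) fun s => by
      obtain ⟨hfin, heq⟩ := coulomb_expand hf hg hff hgg s
      rw [← heq]
      exact coulombEnergy_self_nonneg ((hf.const_smul s).add hg) hfin
  unfold discrim at hd
  linarith

end

/-- If `D(|f|,|f|) < ∞` and `D(|g|,|g|) < ∞`, then `D(|f+g|,|f+g|) < ∞` and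
`D(f+g,f+g) ≤ D(f,f) + D(g,g) + 2√(D(f,f)·D(g,g))`; moreover the class
`𝒜(ℝ³) = {f : D(|f|,|f|) < ∞}` is closed under scalar multiplication, hence is a
linear subspace of `L¹_loc(ℝ³)`. -/
theorem coulomb_finite_add (f g : EuclideanSpace ℝ (Fin 3) → ℝ)
    (hf : Measurable f) (hg : Measurable g)
    (hff : CoulombFinite f f) (hgg : CoulombFinite g g) :
    CoulombFinite (f + g) (f + g) ∧
    coulombEnergy (f + g) (f + g) ≤
      coulombEnergy f f + coulombEnergy g g +
        2 * Real.sqrt (coulombEnergy f f * coulombEnergy g g) ∧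
    ∀ c : ℝ, CoulombFinite (c • f) (c • f) := by
  have hexp := coulomb_expand hf hg hff hgg 1
  rw [one_smul] at hexp
  refine ⟨hexp.1, ?_, fun c => hff.smul c hf⟩
  have hle := (le_abs_self _).trans (Real.abs_le_sqrt (coulombEnergy_sq_le hf hg hff hgg))
  rw [hexp.2]
  linarith
end

section
/- Let n ≥ 1, let v₁, …, vₙ : ℝ³ → [0,∞) be measurable functions with D(vᵢ,vᵢ) < ∞ for each i, which are linearly independent in the sense that any real linear combination ∑ᵢ cᵢ vᵢ vanishing almost everywhere has all coefficients cᵢ = 0. Let d₁, …, dₙ > 0 be real numbers and let p > 2. Then the n×n matrix Ñ with entries Ñᵢᵢ = p·D(vᵢ,vᵢ) + (p−2)·dᵢ on the diagonal and Ñᵢⱼ = p·D(vᵢ,vⱼ) for i ≠ j is symmetric positive definite. -/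
/-!
The Coulomb kernel is a superposition of products of Gaussians: for `x ≠ y`,
`‖x - y‖⁻¹ = ∫ ker x q * ker y q dq` with `q = (s, z) ∈ (0, ∞) × ℝ³` and
`ker x (s, z) = amp s * exp (-2 s² ‖x - z‖²)` (`inv_norm_eq_lintegral`). Integrating over `z` gives
a multiple of `exp (-s² ‖x - y‖²)` by the parallelogram identity, and integrating that over `s`
is a one-dimensional Gaussian integral producing `‖x - y‖⁻¹`.

Consequently, with the potential `F i = pot (v i)`, `F i q = ∫ v i x * ker x q dx`, Tonelli's theorem gives
`D (v i, v j) = ∫ F i * F j`. Finiteness of `D (v i, v i)` says that `F i` is square integrable,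
so `D (v i, v j)` is a Gram matrix in `L²` and its quadratic form is `∫ (∑ i, c i * F i)² ≥ 0`.
The strictly positive diagonal `(p - 2) * d i` upgrades this to positive definiteness.
-/

open MeasureTheory

open scoped ENNReal

namespace Coulomb

local notation "X" => EuclideanSpace ℝ (Fin 3)

/-- The weight of the Gaussian of inverse width `s`; its square compensates the normalisation
`(π / (4 s²)) ^ (3/2)` of the integral over the centre and the factor `√π / 2` of the integral
over `s`. -/
noncomputable def amp (s : ℝ) : ℝ :=
  √((2 / √Real.pi) / (Real.pi / (4 * s ^ 2)) ^ ((3 : ℝ) / 2))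

/-- The square-root kernel `amp s * exp (-2 s² ‖x - z‖²)`, at `q = (s, z)`. -/
noncomputable def ker (x : X) (q : ℝ × X) : ℝ :=
  amp q.1 * Real.exp (-(2 * q.1 ^ 2) * ‖x - q.2‖ ^ 2)

/-- Lebesgue measure on `(0, ∞) × ℝ³`, the parameter space of the Gaussians. -/
noncomputable def parMeasure : Measure (ℝ × X) :=
  (volume.restrict (Set.Ioi (0 : ℝ))).prod volume

instance : SFinite parMeasure := by unfold parMeasure; infer_instance

lemma ker_nonneg (x : X) (q : ℝ × X) : 0 ≤ ker x q :=
  mul_nonneg (Real.sqrt_nonneg _) (Real.exp_pos _).le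

lemma measurable_ker : Measurable (fun a : X × (ℝ × X) => ker a.1 a.2) := by
  unfold ker amp
  fun_prop

lemma measurable_ker_left (x : X) : Measurable (fun q => ker x q) := by
  unfold ker amp
  fun_prop

lemma measurable_ker_right (q : ℝ × X) : Measurable (fun x => ker x q) := by
  unfold ker
  fun_prop

lemma ker_mul_ker (x y z : X) (s : ℝ) :
    ker x (s, z) * ker y (s, z) = amp s ^ 2 * Real.exp (-(s ^ 2) * ‖x - y‖ ^ 2) *
      Real.exp (-(4 * s ^ 2) * ‖z - (2⁻¹ : ℝ) • (x + y)‖ ^ 2) := by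
  have hpar : ‖x - z‖ ^ 2 + ‖y - z‖ ^ 2
      = 2 * ‖z - (2⁻¹ : ℝ) • (x + y)‖ ^ 2 + ‖x - y‖ ^ 2 / 2 := by
    have h := parallelogram_law_with_norm ℝ (x - z) (y - z)
    have h1 : x - z + (y - z) = (-2 : ℝ) • (z - (2⁻¹ : ℝ) • (x + y)) := by module
    have h2 : x - z - (y - z) = x - y := by abel
    have h3 : ‖(-2 : ℝ)‖ = 2 := by norm_num
    rw [h1, h2, norm_smul, h3] at h
    linarith
  have hexp : -(2 * s ^ 2) * ‖x - z‖ ^ 2 + -(2 * s ^ 2) * ‖y - z‖ ^ 2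
      = -(s ^ 2) * ‖x - y‖ ^ 2 + -(4 * s ^ 2) * ‖z - (2⁻¹ : ℝ) • (x + y)‖ ^ 2 := by
    linear_combination (-(2 * s ^ 2)) * hpar
  have := congrArg Real.exp hexp
  rw [Real.exp_add, Real.exp_add] at this
  simp only [ker]
  linear_combination (amp s ^ 2) * this

lemma lintegral_ker_mul_ker (x y : X) {s : ℝ} (hs : 0 < s) :
    ∫⁻ z, ENNReal.ofReal (ker x (s, z) * ker y (s, z))
      = ENNReal.ofReal (2 / √Real.pi * Real.exp (-(‖x - y‖ ^ 2) * s ^ 2)) := by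
  have hb : 0 < 4 * s ^ 2 := by positivity
  have hval := GaussianFourier.integral_rexp_neg_mul_sq_norm (V := X) hb
  have hpos : 0 < (Real.pi / (4 * s ^ 2)) ^ ((3 : ℝ) / 2) := by
    have := Real.pi_pos
    positivity
  simp only [finrank_euclideanSpace, Fintype.card_fin, Nat.cast_ofNat] at hval
  have hint : Integrable (fun z : X => Real.exp (-(4 * s ^ 2) * ‖z‖ ^ 2)) := by
    by_contra h
    rw [integral_undef h] at hval
    exact hpos.ne hval
  simp_rw [ker_mul_ker]
  rw [← ofReal_integral_eq_lintegral_ofReal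
    ((hint.comp_sub_right ((2⁻¹ : ℝ) • (x + y))).const_mul _)
    (Filter.Eventually.of_forall fun z => by positivity)]
  rw [integral_const_mul,
    integral_sub_right_eq_self (fun z : X => Real.exp (-(4 * s ^ 2) * ‖z‖ ^ 2)), hval]
  congr 1
  rw [amp, Real.sq_sqrt (by positivity)]
  field_simp

lemma inv_norm_eq_lintegral {x y : X} (hxy : x ≠ y) :
    ENNReal.ofReal ‖x - y‖⁻¹ = ∫⁻ q, ENNReal.ofReal (ker x q * ker y q) ∂parMeasure := by
  have hr : 0 < ‖x - y‖ := norm_pos_iff.2 (sub_ne_zero.2 hxy)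
  have hm : Measurable (fun q => ENNReal.ofReal (ker x q * ker y q)) :=
    ((measurable_ker_left x).mul (measurable_ker_left y)).ennreal_ofReal
  rw [parMeasure, lintegral_prod _ hm.aemeasurable,
    setLIntegral_congr_fun measurableSet_Ioi fun s hs => lintegral_ker_mul_ker x y hs,
    ← ofReal_integral_eq_lintegral_ofReal
      (((integrable_exp_neg_mul_sq (sq_pos_of_pos hr)).integrableOn).const_mul _)
      (Filter.Eventually.of_forall fun z => by positivity),
    integral_const_mul, integral_gaussian_Ioi, Real.sqrt_div Real.pi_pos.le,
    Real.sqrt_sq hr.le]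
  congr 1
  have := Real.sqrt_pos.2 Real.pi_pos
  field_simp

/-- The potential of `f` with respect to the square-root kernel. -/
noncomputable def pot (f : X → ℝ) (q : ℝ × X) : ℝ≥0∞ :=
  ∫⁻ x, ENNReal.ofReal (f x * ker x q)

lemma measurable_mul_ker {f : X → ℝ} (hf : Measurable f) :
    Measurable (fun a : X × (ℝ × X) => ENNReal.ofReal (f a.1 * ker a.1 a.2)) :=
  ((hf.comp measurable_fst).mul measurable_ker).ennreal_ofReal

lemma measurable_pot {f : X → ℝ} (hf : Measurable f) : Measurable (pot f) :=
  (measurable_mul_ker hf).lintegral_prod_left'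

/-- Tonelli: the Coulomb energy of nonnegative functions is the `L²` pairing of potentials. -/
lemma lintegral_pot_mul_pot {f g : X → ℝ} (hf : Measurable f) (hg : Measurable g)
    (hf0 : ∀ x, 0 ≤ f x) (hg0 : ∀ x, 0 ≤ g x) :
    ∫⁻ q, pot f q * pot g q ∂parMeasure
      = ∫⁻ x, ∫⁻ y, ENNReal.ofReal (f x * g y * ‖x - y‖⁻¹) := by
  have hfk := measurable_mul_ker hf
  have hgk := measurable_mul_ker hg
  calc ∫⁻ q, pot f q * pot g q ∂parMeasure
      = ∫⁻ q, ∫⁻ x, ENNReal.ofReal (f x * ker x q) * pot g q ∂volume ∂parMeasure := by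
        refine lintegral_congr fun q => ?_
        rw [lintegral_mul_const _ (hf.fun_mul (measurable_ker_right q)).ennreal_ofReal]
        rfl
    _ = ∫⁻ x, ∫⁻ q, ENNReal.ofReal (f x * ker x q) * pot g q ∂parMeasure := by
        refine lintegral_lintegral_swap (Measurable.aemeasurable ?_)
        exact (hfk.comp measurable_swap).mul ((measurable_pot hg).comp measurable_fst)
    _ = ∫⁻ x, ∫⁻ q, ∫⁻ y, ENNReal.ofReal (f x * ker x q) * ENNReal.ofReal (g y * ker y q)
          ∂volume ∂parMeasure := by
        refine lintegral_congr fun x => lintegral_congr fun q => ?_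
        rw [lintegral_const_mul _ (hg.fun_mul (measurable_ker_right q)).ennreal_ofReal]
        rfl
    _ = ∫⁻ x, ∫⁻ y, ∫⁻ q, ENNReal.ofReal (f x * ker x q) * ENNReal.ofReal (g y * ker y q)
          ∂parMeasure := by
        refine lintegral_congr fun x => lintegral_lintegral_swap (Measurable.aemeasurable ?_)
        exact (((measurable_ker_left x).const_mul (f x)).ennreal_ofReal.comp measurable_fst).mul
          (hgk.comp measurable_swap)
    _ = ∫⁻ x, ∫⁻ y, ENNReal.ofReal (f x * g y * ‖x - y‖⁻¹) := by
        refine lintegral_congr fun x => lintegral_congr_ae ?_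
        -- The kernel formula fails only on the diagonal, a null set for each fixed `x`.
        filter_upwards [compl_mem_ae_iff.2 (measure_singleton (μ := volume) x)] with y hy
        have hxy : x ≠ y := fun h => hy h.symm
        rw [ENNReal.ofReal_mul (mul_nonneg (hf0 x) (hg0 y)), inv_norm_eq_lintegral hxy,
          ← lintegral_const_mul _ ((measurable_ker_left x).fun_mul
            (measurable_ker_left y)).ennreal_ofReal]
        refine lintegral_congr fun q => ?_
        rw [← ENNReal.ofReal_mul (mul_nonneg (hf0 x) (ker_nonneg x q)),
          ← ENNReal.ofReal_mul (mul_nonneg (hf0 x) (hg0 y))]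
        congr 1
        ring

lemma memLp_pot {f : X → ℝ} (hf : Measurable f) (hf0 : ∀ x, 0 ≤ f x)
    (hfin : CoulombFinite f f) :
    (∀ᵐ q ∂parMeasure, pot f q < ∞) ∧ MemLp (fun q => (pot f q).toReal) 2 parMeasure := by
  have hlt : ∫⁻ q, pot f q * pot f q ∂parMeasure < ∞ := by
    rw [lintegral_pot_mul_pot hf hf hf0 hf0]
    simpa only [CoulombFinite, abs_of_nonneg (hf0 _)] using hfin
  have hm := measurable_pot hf
  refine ⟨?_, ?_⟩
  · filter_upwards [ae_lt_top (hm.mul hm) hlt.ne] with q hq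
    by_contra h
    simp [not_lt_top_iff.1 h] at hq
  · rw [memLp_two_iff_integrable_sq hm.ennreal_toReal.aestronglyMeasurable]
    have := integrable_toReal_of_lintegral_ne_top (hm.mul hm).aemeasurable hlt.ne
    simpa [sq] using this

lemma coulombEnergy_eq {f g : X → ℝ} (hf : Measurable f) (hg : Measurable g)
    (hf0 : ∀ x, 0 ≤ f x) (hg0 : ∀ x, 0 ≤ g x)
    (hff : CoulombFinite f f) (hgg : CoulombFinite g g) :
    coulombEnergy f g = ∫ q, (pot f q).toReal * (pot g q).toReal ∂parMeasure := by
  obtain ⟨hf1, hf2⟩ := memLp_pot hf hf0 hff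
  obtain ⟨hg1, hg2⟩ := memLp_pot hg hg0 hgg
  have hint : Integrable (fun q => (pot f q).toReal * (pot g q).toReal) parMeasure :=
    hf2.integrable_mul hg2
  have hpair : ∫⁻ x, ∫⁻ y, ENNReal.ofReal (f x * g y * ‖x - y‖⁻¹)
      = ENNReal.ofReal (∫ q, (pot f q).toReal * (pot g q).toReal ∂parMeasure) := by
    rw [← lintegral_pot_mul_pot hf hg hf0 hg0, ofReal_integral_eq_lintegral_ofReal hint
      (Filter.Eventually.of_forall fun q => by positivity)]
    refine lintegral_congr_ae ?_
    filter_upwards [hf1, hg1] with q h1 h2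
    rw [ENNReal.ofReal_mul ENNReal.toReal_nonneg, ENNReal.ofReal_toReal h1.ne,
      ENNReal.ofReal_toReal h2.ne]
  have hmeas : Measurable (fun a : X × X => f a.1 * g a.2 * ‖a.1 - a.2‖⁻¹) := by
    fun_prop
  have hpos (x y : X) : 0 ≤ f x * g y * ‖x - y‖⁻¹ :=
    mul_nonneg (mul_nonneg (hf0 x) (hg0 y)) (by positivity)
  have hinner (x : X) : ∫ y, f x * g y * ‖x - y‖⁻¹
      = (∫⁻ y, ENNReal.ofReal (f x * g y * ‖x - y‖⁻¹)).toReal :=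
    integral_eq_lintegral_of_nonneg_ae (Filter.Eventually.of_forall (hpos x))
      (hmeas.comp measurable_prodMk_left).aestronglyMeasurable
  have hm : Measurable fun x => ∫⁻ y, ENNReal.ofReal (f x * g y * ‖x - y‖⁻¹) :=
    hmeas.ennreal_ofReal.lintegral_prod_right'
  rw [coulombEnergy]
  simp_rw [hinner]
  rw [integral_toReal hm.aemeasurable (ae_lt_top hm (by rw [hpair]; exact ENNReal.ofReal_ne_top)),
    hpair, ENNReal.toReal_ofReal (integral_nonneg fun q => by positivity)]

end Coulomb

/-- For nonnegative measurable functions `v₁,…,vₙ` with finite Coulomb energy, linearly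
independent in the a.e. sense, positive numbers `d₁,…,dₙ` and `p > 2`, the matrix
`Ñᵢᵢ = p·D(vᵢ,vᵢ) + (p−2)·dᵢ`, `Ñᵢⱼ = p·D(vᵢ,vⱼ)` (`i ≠ j`) is symmetric positive
definite. -/
theorem tildeN_posDef {n : ℕ} (hn : 1 ≤ n)
    (v : Fin n → EuclideanSpace ℝ (Fin 3) → ℝ)
    (hmeas : ∀ i, Measurable (v i))
    (hnonneg : ∀ i, ∀ x, 0 ≤ v i x)
    (hfin : ∀ i, CoulombFinite (v i) (v i))
    (hindep : ∀ c : Fin n → ℝ,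
      (fun x => ∑ i, c i * v i x) =ᵐ[volume] 0 → ∀ i, c i = 0)
    (d : Fin n → ℝ) (hd : ∀ i, 0 < d i)
    (p : ℝ) (hp : 2 < p) :
    (Matrix.of fun i j : Fin n =>
      if i = j then p * coulombEnergy (v i) (v i) + (p - 2) * d i
      else p * coulombEnergy (v i) (v j)).PosDef := by
  set G : Fin n → ℝ × EuclideanSpace ℝ (Fin 3) → ℝ :=
    fun i q => (Coulomb.pot (v i) q).toReal with hG
  have hL (i) : MemLp (G i) 2 Coulomb.parMeasure :=
    (Coulomb.memLp_pot (hmeas i) (hnonneg i) (hfin i)).2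
  have hE (i j) : coulombEnergy (v i) (v j) = ∫ q, G i q * G j q ∂Coulomb.parMeasure :=
    Coulomb.coulombEnergy_eq (hmeas i) (hmeas j) (hnonneg i) (hnonneg j) (hfin i) (hfin j)
  have hsplit : (Matrix.of fun i j : Fin n =>
      if i = j then p * coulombEnergy (v i) (v i) + (p - 2) * d i
      else p * coulombEnergy (v i) (v j))
      = Matrix.of (fun i j => p * ∫ q, G i q * G j q ∂Coulomb.parMeasure)
        + Matrix.diagonal fun i => (p - 2) * d i := by
    ext i j
    by_cases h : i = j
    · subst h
      simp [hE]
    · simp [hE, h]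
  rw [hsplit]
  refine Matrix.PosDef.posSemidef_add ?_
    (Matrix.PosDef.diagonal fun i => mul_pos (by linarith) (hd i))
  refine Matrix.PosSemidef.of_dotProduct_mulVec_nonneg ?_ fun c => ?_
  · ext i j
    simp [mul_comm]
  · have hint (i j) : Integrable (fun q => c i * c j * (G i q * G j q)) Coulomb.parMeasure :=
      ((hL i).integrable_mul (hL j)).const_mul _
    have hquad : star c ⬝ᵥ (Matrix.of (fun i j => p * ∫ q, G i q * G j q ∂Coulomb.parMeasure)
        |>.mulVec c) = p * ∫ q, (∑ i, c i * G i q) ^ 2 ∂Coulomb.parMeasure := by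
      have hsq (q) : (∑ i, c i * G i q) ^ 2 = ∑ i, ∑ j, c i * c j * (G i q * G j q) := by
        rw [sq, Finset.sum_mul_sum]
        exact Finset.sum_congr rfl fun i _ => Finset.sum_congr rfl fun j _ => by ring
      simp_rw [hsq]
      rw [integral_finsetSum _ fun i _ => integrable_finsetSum _ fun j _ => hint i j]
      simp only [dotProduct, Matrix.mulVec, Matrix.of_apply, Finset.mul_sum, star_trivial]
      refine Finset.sum_congr rfl fun i _ => ?_
      rw [integral_finsetSum _ fun j _ => hint i j, Finset.mul_sum]
      refine Finset.sum_congr rfl fun j _ => ?_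
      rw [integral_const_mul]
      ring
    rw [hquad]
    exact mul_nonneg (by linarith) (integral_nonneg fun q => sq_nonneg _)
end

section
/- Let n ≥ 1, let p > 2 be real, let a₁, …, aₙ > 0 be real numbers, and let B be a real symmetric positive definite n×n matrix all of whose entries are nonnegative. Then for every μ ∈ [0,1] there exists a unique n-tuple (t₁, …, tₙ) ∈ (0,∞)ⁿ solving the system tᵢ² aᵢ − tᵢ^{2p} Bᵢᵢ − μ · ∑_{j≠i} tᵢ^p tⱼ^p Bᵢⱼ = 0 for all i = 1, …, n. -/
open Finset

/-!
In the variables `sᵢ = tᵢ ^ p`, and after division by `tᵢ ^ p`, the system becomes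
`aᵢ sᵢ ^ (q - 1) = (C s)ᵢ` with `q = 2 / p ∈ (0, 1)` and `C = (1 - μ) diag B + μ B`
(`nehari_equation_iff`). The matrix `C` is symmetric, has nonnegative entries, and is positive
definite as a convex combination of `diag B` and `B` (`coupling_form_pos`).

Uniqueness (`reduced_unique`): for two solutions `s, s'`, pairing the difference of the equations
with `s - s'` gives `(s - s')ᵀ C (s - s') = ∑ aᵢ (sᵢ - s'ᵢ) (sᵢ ^ (q - 1) - s'ᵢ ^ (q - 1)) ≤ 0`,
because `x ↦ x ^ (q - 1)` is decreasing.

Existence (`reduced_exists`): the equations are the critical point equations of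
`J s = ∑ aᵢ / q * sᵢ ^ q - sᵀ C s / 2`. On a compact box `[ε, M]ⁿ` the functional `J` has a
maximizer. If `M` is large then `∂ᵢJ < 0` on the face `sᵢ = M`, and if `ε` is small compared with
`M` then `∂ᵢJ > 0` on the face `sᵢ = ε`, so the maximizer lies on no face and is a critical point.
-/

/-- The matrix `(1 - μ) diag B + μ B`. -/
def couplingMatrix {n : ℕ} (B : Matrix (Fin n) (Fin n) ℝ) (μ : ℝ) (i j : Fin n) : ℝ :=
  if i = j then B i i else μ * B i j

lemma coupling_form_pos {n : ℕ} (B : Matrix (Fin n) (Fin n) ℝ) (hB : B.PosDef)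
    (μ : ℝ) (hμ : μ ∈ Set.Icc (0 : ℝ) 1) (v : Fin n → ℝ) (hv : v ≠ 0) :
    0 < ∑ i, v i * ∑ j, couplingMatrix B μ i j * v j := by
  have key : ∑ i, v i * ∑ j, couplingMatrix B μ i j * v j
      = (1 - μ) * ∑ i, B i i * v i ^ 2 + μ * ∑ i, v i * ∑ j, B i j * v j := by
    rw [mul_sum, mul_sum, ← sum_add_distrib]
    refine sum_congr rfl fun i _ => ?_
    have h : ∀ j, couplingMatrix B μ i j * v j
        = μ * (B i j * v j) + if i = j then (1 - μ) * B i i * v i else 0 := by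
      intro j
      unfold couplingMatrix
      split_ifs with h
      · subst h; ring
      · ring
    simp_rw [h]
    rw [sum_add_distrib, ← mul_sum]
    simp
    ring
  have h1 : 0 < ∑ i, v i * ∑ j, B i j * v j := by
    have := hB.dotProduct_mulVec_pos hv
    simpa [dotProduct, Matrix.mulVec] using this
  obtain ⟨k, hk⟩ := Function.ne_iff.1 hv
  have h2 : 0 < ∑ i, B i i * v i ^ 2 := by
    refine sum_pos' (fun i _ => mul_nonneg hB.diag_pos.le (sq_nonneg _)) ⟨k, mem_univ _, ?_⟩
    exact mul_pos hB.diag_pos (by simpa using (sq_pos_of_ne_zero hk))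
  rw [key]
  obtain ⟨h0, h0'⟩ := hμ
  rcases h0.eq_or_lt with h | h
  · rw [← h]; simpa using h2
  · have := mul_pos h h1
    have := mul_nonneg (sub_nonneg.2 h0') h2.le
    linarith

lemma reduced_unique {n : ℕ} (q : ℝ) (hq1 : q < 1) (a : Fin n → ℝ) (ha : ∀ i, 0 < a i)
    (C : Fin n → Fin n → ℝ) (hC : ∀ v : Fin n → ℝ, v ≠ 0 → 0 < ∑ i, v i * ∑ j, C i j * v j)
    (s s' : Fin n → ℝ) (hs : ∀ i, 0 < s i) (hs' : ∀ i, 0 < s' i)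
    (h : ∀ i, a i * s i ^ (q - 1) = ∑ j, C i j * s j)
    (h' : ∀ i, a i * s' i ^ (q - 1) = ∑ j, C i j * s' j) : s = s' := by
  by_contra hne
  have h1 := hC (s - s') (sub_ne_zero.2 hne)
  refine h1.not_ge (sum_nonpos fun i _ => ?_)
  have h2 : ∑ j, C i j * (s - s') j = a i * (s i ^ (q - 1) - s' i ^ (q - 1)) := by
    rw [mul_sub, h, h', ← sum_sub_distrib]
    exact sum_congr rfl fun j _ => by simp [mul_sub]
  rw [h2, Pi.sub_apply]
  rcases le_total (s i) (s' i) with hle | hle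
  · have := Real.rpow_le_rpow_of_nonpos (hs i) hle (sub_nonpos.2 hq1.le)
    exact mul_nonpos_of_nonpos_of_nonneg (sub_nonpos.2 hle)
      (mul_nonneg (ha i).le (sub_nonneg.2 this))
  · have := Real.rpow_le_rpow_of_nonpos (hs' i) hle (sub_nonpos.2 hq1.le)
    exact mul_nonpos_of_nonneg_of_nonpos (sub_nonneg.2 hle)
      (mul_nonpos_of_nonneg_of_nonpos (ha i).le (sub_nonpos.2 this))

/-- The functional `∑ aᵢ / q * sᵢ ^ q - sᵀ C s / 2`. -/
noncomputable def energy {n : ℕ} (q : ℝ) (a : Fin n → ℝ) (C : Fin n → Fin n → ℝ)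
    (s : Fin n → ℝ) : ℝ :=
  ∑ i, a i / q * s i ^ q - (∑ i, ∑ j, C i j * (s i * s j)) / 2

lemma energy_hasDerivAt {n : ℕ} (q : ℝ) (hq0 : 0 < q) (a : Fin n → ℝ) (C : Fin n → Fin n → ℝ)
    (hsymm : ∀ i j, C i j = C j i) (s v : Fin n → ℝ) (hs : ∀ i, 0 < s i) :
    HasDerivAt (fun x : ℝ => energy q a C (s + x • v))
      (∑ i, v i * (a i * s i ^ (q - 1) - ∑ j, C i j * s j)) 0 := by
  have hl : ∀ i, HasDerivAt (fun x : ℝ => (s + x • v) i) (v i) 0 := by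
    intro i
    simpa using ((hasDerivAt_id (0 : ℝ)).mul_const (v i)).const_add (s i)
  have h1 : HasDerivAt (fun x : ℝ => ∑ i, a i / q * (s + x • v) i ^ q)
      (∑ i, a i / q * (v i * q * s i ^ (q - 1))) 0 := by
    refine HasDerivAt.fun_sum fun i _ => ?_
    have := ((hl i).rpow_const (p := q) (Or.inl (by simpa using (hs i).ne'))).const_mul (a i / q)
    simpa using this
  have h2 : HasDerivAt (fun x : ℝ => ∑ i, ∑ j, C i j * ((s + x • v) i * (s + x • v) j))
      (∑ i, ∑ j, C i j * (v i * s j + s i * v j)) 0 := by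
    refine HasDerivAt.fun_sum fun i _ => HasDerivAt.fun_sum fun j _ => ?_
    simpa using ((hl i).mul (hl j)).const_mul (C i j)
  refine (h1.sub (h2.div_const 2)).congr_deriv ?_
  -- By symmetry of `C` the two halves of the derivative of the quadratic form agree.
  have h3 : ∑ i, ∑ j, C i j * (s i * v j) = ∑ i, ∑ j, C i j * (v i * s j) := by
    rw [sum_comm]
    exact sum_congr rfl fun i _ => sum_congr rfl fun j _ => by rw [hsymm]; ring
  simp_rw [mul_add, sum_add_distrib, h3, mul_sub, sum_sub_distrib, mul_sum]
  rw [add_self_div_two]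
  congr 1
  · exact sum_congr rfl fun i _ => by field_simp
  · exact sum_congr rfl fun i _ => sum_congr rfl fun j _ => by ring

/-- First-order condition at a maximizer of `energy` over a box in the positive orthant. -/
lemma energy_variational {n : ℕ} (q : ℝ) (hq0 : 0 < q) (a : Fin n → ℝ) (C : Fin n → Fin n → ℝ)
    (hsymm : ∀ i j, C i j = C j i) (ε M : ℝ) (hε : 0 < ε) (s : Fin n → ℝ)
    (hs : ∀ i, s i ∈ Set.Icc ε M)
    (hmax : ∀ y : Fin n → ℝ, (∀ i, y i ∈ Set.Icc ε M) → energy q a C y ≤ energy q a C s)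
    (i : Fin n) (y : ℝ) (hy : y ∈ Set.Icc ε M) :
    (y - s i) * (a i * s i ^ (q - 1) - ∑ j, C i j * s j) ≤ 0 := by
  have hd := energy_hasDerivAt q hq0 a C hsymm s (Pi.single i (y - s i))
    fun k => hε.trans_le (hs k).1
  rw [Fintype.sum_eq_single i (fun k hk => by simp [hk]), Pi.single_eq_same] at hd
  refine le_of_tendsto hd.tendsto_slope_zero_right ?_
  filter_upwards [Ioo_mem_nhdsGT (zero_lt_one (α := ℝ))] with x hx
  refine mul_nonpos_of_nonneg_of_nonpos (inv_nonneg.2 hx.1.le) (sub_nonpos.2 ?_)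
  simp only [zero_add, zero_smul, add_zero]
  refine hmax _ fun k => ?_
  rcases eq_or_ne k i with rfl | hk
  · have := (convex_Icc ε M) (hs k) hy (sub_nonneg.2 hx.2.le) hx.1.le (by ring)
    convert this using 1
    simp
    ring
  · simpa [hk] using hs k

lemma reduced_exists {n : ℕ} (q : ℝ) (hq0 : 0 < q) (hq1 : q < 1) (a : Fin n → ℝ)
    (ha : ∀ i, 0 < a i) (C : Fin n → Fin n → ℝ) (hsymm : ∀ i j, C i j = C j i)
    (hC0 : ∀ i j, 0 ≤ C i j) (hCd : ∀ i, 0 < C i i) :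
    ∃ s : Fin n → ℝ, (∀ i, 0 < s i) ∧ ∀ i, a i * s i ^ (q - 1) = ∑ j, C i j * s j := by
  -- `M ≥ 1` gives `M ^ (q - 1) ≤ 1`, hence `aᵢ M ^ (q - 1) ≤ aᵢ < Cᵢᵢ M`.
  obtain ⟨M, hM1, hM⟩ : ∃ M : ℝ, 1 ≤ M ∧ ∀ i, a i < C i i * M := by
    have hnn : ∀ i, 0 ≤ a i / C i i := fun i => (div_pos (ha i) (hCd i)).le
    refine ⟨1 + ∑ i, a i / C i i, by linarith [sum_nonneg fun i (_ : i ∈ univ) => hnn i], ?_⟩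
    intro i
    have := single_le_sum (fun i _ => hnn i) (mem_univ i)
    rw [← div_lt_iff₀' (hCd i)]
    linarith
  -- `ε` is small enough that `aᵢ ε ^ (q - 1)` exceeds every value of `(C s)ᵢ` on the box.
  obtain ⟨ε, ⟨hε, hε1⟩, hεK⟩ : ∃ ε : ℝ, ε ∈ Set.Ioo (0 : ℝ) 1 ∧
      ∀ i, ∑ j, C i j * M < a i * ε ^ (q - 1) := by
    have ht : Filter.Tendsto (fun x : ℝ => x ^ (q - 1)) (nhdsWithin 0 (Set.Ioi 0))
        Filter.atTop := tendsto_rpow_neg_nhdsGT_zero (by linarith)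
    have h1 : ∀ᶠ x : ℝ in nhdsWithin 0 (Set.Ioi 0), ∀ i, ∑ j, C i j * M < a i * x ^ (q - 1) :=
      Filter.eventually_all.2 fun i =>
        (ht.const_mul_atTop (ha i)).eventually_gt_atTop _
    exact ((Filter.eventually_of_mem (Ioo_mem_nhdsGT zero_lt_one) fun x hx => hx).and h1).exists
  have hεM : ε ≤ M := hε1.le.trans hM1
  have hcont : ContinuousOn (energy q a C) (Set.univ.pi fun _ => Set.Icc ε M) := by
    unfold energy
    refine Continuous.continuousOn (Continuous.sub ?_ (by fun_prop))
    exact continuous_finsetSum _ fun i _ =>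
      continuous_const.mul ((continuous_apply i).rpow_const fun _ => Or.inr hq0.le)
  obtain ⟨s, hs, hmax⟩ := (isCompact_univ_pi fun _ : Fin n => isCompact_Icc).exists_isMaxOn
    (⟨fun _ => ε, fun _ _ => ⟨le_rfl, hεM⟩⟩ :
      (Set.univ.pi fun _ : Fin n => Set.Icc ε M).Nonempty) hcont
  have hs : ∀ i, s i ∈ Set.Icc ε M := fun i => hs i trivial
  have hvar := energy_variational q hq0 a C hsymm ε M hε s hs fun y hy => hmax fun i _ => hy i
  have hpos : ∀ i, 0 < s i := fun i => hε.trans_le (hs i).1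
  refine ⟨s, hpos, fun i => ?_⟩
  rcases lt_trichotomy (a i * s i ^ (q - 1)) (∑ j, C i j * s j) with h | h | h
  · exfalso
    have hi : s i = ε := by
      have := hvar i ε ⟨le_rfl, hεM⟩
      have := nonneg_of_mul_nonpos_left this (sub_neg.2 h)
      linarith [(hs i).1]
    have h2 : ∑ j, C i j * s j ≤ ∑ j, C i j * M :=
      sum_le_sum fun j _ => mul_le_mul_of_nonneg_left (hs j).2 (hC0 i j)
    rw [hi] at h
    linarith [hεK i]
  · exact h
  · exfalso
    have hi : s i = M := by
      have := hvar i M ⟨hεM, le_rfl⟩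
      have := nonpos_of_mul_nonpos_left this (sub_pos.2 h)
      linarith [(hs i).2]
    have h2 : C i i * s i ≤ ∑ j, C i j * s j :=
      single_le_sum (fun j _ => mul_nonneg (hC0 i j) (hpos j).le) (mem_univ i)
    rw [hi] at h h2
    have h3 : a i * M ^ (q - 1) ≤ a i * 1 :=
      mul_le_mul_of_nonneg_left (Real.rpow_le_one_of_one_le_of_nonpos hM1 (by linarith)) (ha i).le
    linarith [hM i]

lemma nehari_equation_iff {n : ℕ} (p : ℝ) (hp : 2 < p) (a : Fin n → ℝ)
    (B : Matrix (Fin n) (Fin n) ℝ) (μ : ℝ) (t : Fin n → ℝ) (ht : ∀ i, 0 < t i) (i : Fin n) :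
    t i ^ 2 * a i - t i ^ (2 * p) * B i i -
        μ * ∑ j ∈ univ.erase i, t i ^ p * t j ^ p * B i j = 0 ↔
      a i * (t i ^ p) ^ (2 / p - 1) = ∑ j, couplingMatrix B μ i j * t j ^ p := by
  have h1 : t i ^ 2 = t i ^ p * (t i ^ p) ^ (2 / p - 1) := by
    rw [← Real.rpow_mul (ht i).le, ← Real.rpow_add (ht i), ← Real.rpow_natCast]
    congr 1
    have : p ≠ 0 := by linarith
    push_cast
    field_simp
    ring
  have h2 : t i ^ (2 * p) = t i ^ p * t i ^ p := by
    rw [← Real.rpow_add (ht i), two_mul]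
  have h3 : ∑ j, couplingMatrix B μ i j * t j ^ p
      = B i i * t i ^ p + μ * ∑ j ∈ univ.erase i, t j ^ p * B i j := by
    rw [← add_sum_erase _ _ (mem_univ i), mul_sum]
    congr 1
    · simp [couplingMatrix]
    · refine sum_congr rfl fun j hj => ?_
      simp only [couplingMatrix, if_neg (ne_of_mem_erase hj).symm]
      ring
  have h4 : ∑ j ∈ univ.erase i, t i ^ p * t j ^ p * B i j
      = t i ^ p * ∑ j ∈ univ.erase i, t j ^ p * B i j := by
    rw [mul_sum]
    exact sum_congr rfl fun j _ => by ring
  have hne : t i ^ p ≠ 0 := (Real.rpow_pos_of_pos (ht i) p).ne'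
  rw [h3, h4, h1, h2]
  constructor
  · intro h
    refine mul_left_cancel₀ hne ?_
    linear_combination h
  · intro h
    linear_combination t i ^ p * h

/-- Unique solvability, for every `μ ∈ [0,1]`, of the finite-dimensional Nehari system
`tᵢ² aᵢ − tᵢ^{2p} Bᵢᵢ − μ ∑_{j≠i} tᵢ^p tⱼ^p Bᵢⱼ = 0` in positive tuples, where
`a₁,…,aₙ > 0`, `p > 2` and `B` is symmetric positive definite with nonnegative
entries. -/
theorem nehari_system_unique_solvable {n : ℕ} (hn : 1 ≤ n)
    (p : ℝ) (hp : 2 < p)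
    (a : Fin n → ℝ) (ha : ∀ i, 0 < a i)
    (B : Matrix (Fin n) (Fin n) ℝ) (hBpos : B.PosDef) (hBnonneg : ∀ i j, 0 ≤ B i j)
    (μ : ℝ) (hμ : μ ∈ Set.Icc (0 : ℝ) 1) :
    ∃! t : Fin n → ℝ, (∀ i, 0 < t i) ∧
      ∀ i, t i ^ 2 * a i - t i ^ (2 * p) * B i i -
        μ * ∑ j ∈ univ.erase i, t i ^ p * t j ^ p * B i j = 0 := by
  have hp0 : 0 < p := by linarith
  have hq0 : 0 < 2 / p := by positivity
  have hq1 : 2 / p < 1 := (div_lt_one hp0).2 hp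
  have hsymm : ∀ i j, couplingMatrix B μ i j = couplingMatrix B μ j i := by
    intro i j
    unfold couplingMatrix
    have : B i j = B j i := by simpa using (hBpos.isHermitian.apply j i)
    by_cases h : i = j
    · subst h; rfl
    · rw [if_neg h, if_neg (Ne.symm h), this]
  have hC0 : ∀ i j, 0 ≤ couplingMatrix B μ i j := by
    intro i j
    unfold couplingMatrix
    split_ifs
    · exact hBnonneg i i
    · exact mul_nonneg hμ.1 (hBnonneg i j)
  have hCd : ∀ i, 0 < couplingMatrix B μ i i := fun i => by
    simpa [couplingMatrix] using hBpos.diag_pos (i := i)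
  obtain ⟨s, hs, hsol⟩ := reduced_exists (2 / p) hq0 hq1 a ha _ hsymm hC0 hCd
  have hsp : ∀ i, (s i ^ p⁻¹) ^ p = s i := fun i => Real.rpow_inv_rpow (hs i).le hp0.ne'
  refine ⟨fun i => s i ^ p⁻¹, ⟨fun i => Real.rpow_pos_of_pos (hs i) _, fun i => ?_⟩, ?_⟩
  · rw [nehari_equation_iff p hp a B μ (fun i => s i ^ p⁻¹)
      (fun i => Real.rpow_pos_of_pos (hs i) _) i]
    simp only [hsp]
    exact hsol i
  · rintro t ⟨ht, hteq⟩
    have h := reduced_unique (2 / p) hq1 a ha _ (coupling_form_pos B hBpos μ hμ)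
      (fun i => t i ^ p) s (fun i => Real.rpow_pos_of_pos (ht i) _) hs
      (fun i => (nehari_equation_iff p hp a B μ t ht i).1 (hteq i)) hsol
    funext i
    rw [← h]
    exact (Real.rpow_rpow_inv (ht i).le hp0.ne').symm
end

section
/- Let n ≥ 1, let p > 2 be real, let a₁, …, aₙ > 0, let B be a real symmetric positive definite n×n matrix with nonnegative entries, and let μ ∈ [0,1]. Then every solution (t₁, …, tₙ) ∈ (0,∞)ⁿ of the system tᵢ² aᵢ = tᵢ^{2p} Bᵢᵢ + μ·∑_{j≠i} tᵢ^p tⱼ^p Bᵢⱼ satisfies the a priori bounds tᵢ ≤ (aᵢ/Bᵢᵢ)^{1/(2p−2)} for every i, and tᵢ ≥ (aᵢ/Sᵢ)^{1/(p−2)} for every i, where Sᵢ = ∑_{j=1}^n (aⱼ/Bⱼⱼ)^{p/(2p−2)} Bᵢⱼ > 0. -/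
/-!
Dropping the nonnegative coupling terms from the `i`-th equation and dividing by `tᵢ²` gives
`tᵢ^(2p-2) Bᵢᵢ ≤ aᵢ`, which is the upper bound. Since `μ ≤ 1`, the equation also gives
`tᵢ² aᵢ ≤ tᵢ^p ∑ⱼ tⱼ^p Bᵢⱼ`; inserting the upper bound for every `tⱼ` yields
`aᵢ ≤ tᵢ^(p-2) Sᵢ`, which is the lower bound. Positive definiteness enters only through `Bᵢᵢ > 0`.
-/

open Finset

/-- A priori bounds for positive solutions of the Nehari system
`tᵢ² aᵢ = tᵢ^{2p} Bᵢᵢ + μ ∑_{j≠i} tᵢ^p tⱼ^p Bᵢⱼ`: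
`tᵢ ≤ (aᵢ/Bᵢᵢ)^{1/(2p−2)}` and `tᵢ ≥ (aᵢ/Sᵢ)^{1/(p−2)}`, where
`Sᵢ = ∑ⱼ (aⱼ/Bⱼⱼ)^{p/(2p−2)} Bᵢⱼ > 0`. -/
theorem nehari_system_a_priori_bounds {n : ℕ} (hn : 1 ≤ n)
    (p : ℝ) (hp : 2 < p)
    (a : Fin n → ℝ) (ha : ∀ i, 0 < a i)
    (B : Matrix (Fin n) (Fin n) ℝ) (hBpos : B.PosDef) (hBnonneg : ∀ i j, 0 ≤ B i j)
    (μ : ℝ) (hμ : μ ∈ Set.Icc (0 : ℝ) 1)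
    (t : Fin n → ℝ) (ht : ∀ i, 0 < t i)
    (hsys : ∀ i, t i ^ 2 * a i = t i ^ (2 * p) * B i i +
      μ * ∑ j ∈ univ.erase i, t i ^ p * t j ^ p * B i j) :
    ∀ i, t i ≤ (a i / B i i) ^ (1 / (2 * p - 2)) ∧
      0 < ∑ j, (a j / B j j) ^ (p / (2 * p - 2)) * B i j ∧
      (a i / (∑ j, (a j / B j j) ^ (p / (2 * p - 2)) * B i j)) ^ (1 / (p - 2)) ≤ t i := by
  have hB : ∀ i, 0 < B i i := fun i => hBpos.diag_pos
  have hpow : ∀ i (r : ℝ), t i ^ r = t i ^ 2 * t i ^ (r - 2) := fun i r => by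
    rw [← Real.rpow_natCast, ← Real.rpow_add (ht i)]
    congr 1
    push_cast
    ring
  have htp : ∀ i, 0 < t i ^ p := fun i => Real.rpow_pos_of_pos (ht i) p
  have hsum : ∀ i, 0 ≤ ∑ j ∈ univ.erase i, t i ^ p * t j ^ p * B i j := fun i =>
    sum_nonneg fun j _ => mul_nonneg (mul_pos (htp i) (htp j)).le (hBnonneg i j)
  have hupper : ∀ i, t i ≤ (a i / B i i) ^ (1 / (2 * p - 2)) := by
    intro i
    -- The coupling terms are nonnegative, so the diagonal term alone is at most `tᵢ² aᵢ`.
    have h1 : t i ^ 2 * (t i ^ (2 * p - 2) * B i i) ≤ t i ^ 2 * a i := by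
      rw [hsys i, ← mul_assoc, ← hpow]
      exact le_add_of_nonneg_right (mul_nonneg hμ.1 (hsum i))
    have h2 : t i ^ (2 * p - 2) ≤ a i / B i i :=
      (le_div_iff₀ (hB i)).2 (le_of_mul_le_mul_left h1 (pow_pos (ht i) 2))
    rw [one_div]
    exact (Real.le_rpow_inv_iff_of_pos (ht i).le (div_pos (ha i) (hB i)).le (by linarith)).2 h2
  have hupper_p : ∀ j, t j ^ p ≤ (a j / B j j) ^ (p / (2 * p - 2)) := by
    intro j
    have h := Real.rpow_le_rpow (ht j).le (hupper j) (by linarith : 0 ≤ p)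
    rwa [← Real.rpow_mul (div_pos (ha j) (hB j)).le, one_div_mul_eq_div] at h
  intro i
  have hS : 0 < ∑ j, (a j / B j j) ^ (p / (2 * p - 2)) * B i j :=
    sum_pos' (fun j _ => mul_nonneg ((htp j).le.trans (hupper_p j)) (hBnonneg i j))
      ⟨i, mem_univ i, mul_pos ((htp i).trans_le (hupper_p i)) (hB i)⟩
  refine ⟨hupper i, hS, ?_⟩
  -- Replacing `μ` by `1` merges the diagonal and coupling terms into one full sum.
  have h1 : t i ^ 2 * a i ≤ t i ^ p * ∑ j, t j ^ p * B i j := by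
    have hfull : t i ^ p * ∑ j, t j ^ p * B i j =
        t i ^ (2 * p) * B i i + ∑ j ∈ univ.erase i, t i ^ p * t j ^ p * B i j := by
      rw [mul_sum, ← add_sum_erase _ _ (mem_univ i), two_mul, Real.rpow_add (ht i)]
      simp only [mul_assoc]
    rw [hsys i, hfull]
    gcongr
    exact mul_le_of_le_one_left (hsum i) hμ.2
  have h2 : ∑ j, t j ^ p * B i j ≤ ∑ j, (a j / B j j) ^ (p / (2 * p - 2)) * B i j :=
    sum_le_sum fun j _ => mul_le_mul_of_nonneg_right (hupper_p j) (hBnonneg i j)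
  have h3 := h1.trans (mul_le_mul_of_nonneg_left h2 (htp i).le)
  rw [hpow i p, mul_assoc] at h3
  have h4 := (div_le_iff₀ hS).2 (le_of_mul_le_mul_left h3 (pow_pos (ht i) 2))
  rw [one_div]
  exact (Real.rpow_inv_le_iff_of_pos (div_pos (ha i) hS).le (ht i).le (by linarith)).2 h4
end

section
/- Let n ≥ 1, let p > 2 be real, let a₁, …, aₙ > 0, and let B be a real symmetric positive definite n×n matrix with nonnegative entries. Define φ : (0,∞)ⁿ → ℝ by φ(c₁, …, cₙ) = (1/2)·∑ᵢ cᵢ² aᵢ − (1/(2p))·∑_{i,j} cᵢ^p cⱼ^p Bᵢⱼ. Then the unique (t₁, …, tₙ) ∈ (0,∞)ⁿ solving the system tᵢ² aᵢ = tᵢ^{2p} Bᵢᵢ + ∑_{j≠i} tᵢ^p tⱼ^p Bᵢⱼ for all i is the unique global maximum point of φ on (0,∞)ⁿ: φ(t) > φ(c) for every c ∈ (0,∞)ⁿ with c ≠ t. -/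
/-!
In the variables `xᵢ = cᵢ ^ p` the function `φ` is a concave function `½ ∑ aᵢ xᵢ ^ (2/p)` minus the
strictly convex quadratic form `(1/2p) xᵀ B x`, and the Nehari system says that its gradient vanishes
at `yᵢ = tᵢ ^ p`. Quantitatively, the tangent-line (Bernoulli) inequality
`(p/2) tᵢ^p (cᵢ² - tᵢ²) ≤ tᵢ² (cᵢ^p - tᵢ^p)` combined with `tᵢ² aᵢ = yᵢ (B y)ᵢ` gives
`φ(c) - φ(t) ≤ -(1/2p) (x - y)ᵀ B (x - y)`, which is negative for `x ≠ y`.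
-/

open Finset

/-- Bernoulli's inequality for `(c / t) ^ 2` with exponent `p / 2`, cleared of denominators; it is the
tangent-line bound for the concave function `x ↦ x ^ (2 / p)`. -/
lemma bernoulli_tangent {p c t : ℝ} (hp : 2 < p) (hc : 0 < c) (ht : 0 < t) :
    p / 2 * t ^ p * (c ^ 2 - t ^ 2) ≤ t ^ 2 * (c ^ p - t ^ p) := by
  have hB := one_add_mul_self_le_rpow_one_add (s := (c / t) ^ 2 - 1) (p := p / 2)
    (by nlinarith [sq_nonneg (c / t)]) (by linarith)
  have hpow : (1 + ((c / t) ^ 2 - 1)) ^ (p / 2) = c ^ p / t ^ p := by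
    rw [add_sub_cancel, ← Real.rpow_natCast, ← Real.rpow_mul (by positivity),
      ← Real.div_rpow hc.le ht.le]
    congr 1
    push_cast
    ring
  rw [hpow] at hB
  have htp : 0 < t ^ p := Real.rpow_pos_of_pos ht p
  have h := mul_le_mul_of_nonneg_left hB (by positivity : 0 ≤ t ^ 2 * t ^ p)
  have e1 : t ^ 2 * t ^ p * (1 + p / 2 * ((c / t) ^ 2 - 1))
      = t ^ 2 * t ^ p + p / 2 * t ^ p * (c ^ 2 - t ^ 2) := by
    field_simp
  have e2 : t ^ 2 * t ^ p * (c ^ p / t ^ p) = t ^ 2 * c ^ p := by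
    field_simp
  rw [e1, e2] at h
  linarith

/-- The unique positive solution of the Nehari system
`tᵢ² aᵢ = tᵢ^{2p} Bᵢᵢ + ∑_{j≠i} tᵢ^p tⱼ^p Bᵢⱼ` is the unique global maximum point of
`φ(c) = ½ ∑ᵢ cᵢ² aᵢ − (1/2p) ∑_{i,j} cᵢ^p cⱼ^p Bᵢⱼ` on `(0,∞)ⁿ`. -/
theorem nehari_solution_is_unique_max {n : ℕ} (hn : 1 ≤ n)
    (p : ℝ) (hp : 2 < p)
    (a : Fin n → ℝ) (ha : ∀ i, 0 < a i)
    (B : Matrix (Fin n) (Fin n) ℝ) (hBpos : B.PosDef) (hBnonneg : ∀ i j, 0 ≤ B i j)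
    (φ : (Fin n → ℝ) → ℝ)
    (hφ : ∀ c, φ c = (1 / 2) * ∑ i, c i ^ 2 * a i -
      (1 / (2 * p)) * ∑ i, ∑ j, c i ^ p * c j ^ p * B i j)
    (t : Fin n → ℝ) (ht : ∀ i, 0 < t i)
    (hsys : ∀ i, t i ^ 2 * a i = t i ^ (2 * p) * B i i +
      ∑ j ∈ univ.erase i, t i ^ p * t j ^ p * B i j) :
    ∀ c : Fin n → ℝ, (∀ i, 0 < c i) → c ≠ t → φ c < φ t := by
  intro c hc hct
  have hp0 : 0 < p := by linarith
  have hsys' : ∀ i, t i ^ 2 * a i = t i ^ p * ∑ j, t j ^ p * B i j := by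
    intro i
    rw [hsys i, ← Finset.add_sum_erase univ _ (mem_univ i), mul_add, Finset.mul_sum, two_mul,
      Real.rpow_add (ht i)]
    simp only [mul_assoc]
  have hne : (fun i => c i ^ p - t i ^ p) ≠ 0 := by
    intro h
    apply hct
    funext i
    have hi := congrFun h i
    simp only [Pi.zero_apply, sub_eq_zero] at hi
    exact (Real.rpow_left_inj (hc i).le (ht i).le hp0.ne').1 hi
  have hQ : 0 < ∑ i, ∑ j, (c i ^ p - t i ^ p) * (c j ^ p - t j ^ p) * B i j := by
    have h := hBpos.dotProduct_mulVec_pos hne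
    simp only [dotProduct, Matrix.mulVec, Pi.star_apply, star_trivial, Finset.mul_sum] at h
    refine h.trans_eq (Finset.sum_congr rfl fun i _ => Finset.sum_congr rfl fun j _ => ?_)
    ring
  have hterm : ∀ i, p / 2 * (c i ^ 2 * a i - t i ^ 2 * a i)
      ≤ ∑ j, (c i ^ p - t i ^ p) * t j ^ p * B i j := by
    intro i
    have htp : 0 < t i ^ p := Real.rpow_pos_of_pos (ht i) p
    have h := mul_le_mul_of_nonneg_right (bernoulli_tangent hp (hc i) (ht i)) (ha i).le
    have e : ∑ j, (c i ^ p - t i ^ p) * t j ^ p * B i j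
        = (c i ^ p - t i ^ p) * ∑ j, t j ^ p * B i j := by
      simp only [Finset.mul_sum, mul_assoc]
    rw [e]
    refine le_of_mul_le_mul_left ?_ htp
    calc _ = p / 2 * t i ^ p * (c i ^ 2 - t i ^ 2) * a i := by ring
      _ ≤ t i ^ 2 * (c i ^ p - t i ^ p) * a i := h
      _ = (c i ^ p - t i ^ p) * (t i ^ 2 * a i) := by ring
      _ = _ := by rw [hsys' i]; ring
  have hsum := Finset.sum_le_sum fun i (_ : i ∈ univ) => hterm i
  rw [← Finset.mul_sum, Finset.sum_sub_distrib] at hsum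
  have hsymm : ∑ i, ∑ j, c i ^ p * t j ^ p * B i j = ∑ i, ∑ j, t i ^ p * c j ^ p * B i j := by
    rw [Finset.sum_comm]
    refine Finset.sum_congr rfl fun i _ => Finset.sum_congr rfl fun j _ => ?_
    have hB : B j i = B i j := by simpa using hBpos.isHermitian.apply i j
    rw [hB]
    ring
  simp only [sub_mul, mul_sub, Finset.sum_sub_distrib] at hsum hQ
  have key : p * (∑ i, c i ^ 2 * a i - ∑ i, t i ^ 2 * a i)
      < ∑ i, ∑ j, c i ^ p * c j ^ p * B i j - ∑ i, ∑ j, t i ^ p * t j ^ p * B i j := by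
    linarith
  rw [hφ, hφ, ← sub_pos]
  have e : ∀ S T X Y : ℝ, 1 / 2 * T - 1 / (2 * p) * Y - (1 / 2 * S - 1 / (2 * p) * X)
      = 1 / (2 * p) * (X - Y - p * (S - T)) := by
    intro S T X Y
    field_simp
    ring
  rw [e]
  exact mul_pos (by positivity) (sub_pos.2 key)
end

section
/- Let n ≥ 1, let p > 2 be real, let a₁, …, aₙ > 0, and let B be a real symmetric n×n matrix with nonnegative entries. Fix an index i₀ and a point c ∈ [0,∞)ⁿ with c_{i₀} = 0. Then there exists ε > 0 such that the function t ↦ φ(c₁, …, t, …, cₙ) (with t in the i₀-th slot) is strictly increasing on (0, ε), where φ(c₁, …, cₙ) = (1/2)·∑ᵢ cᵢ² aᵢ − (1/(2p))·∑_{i,j} cᵢ^p cⱼ^p Bᵢⱼ. In particular, φ does not attain a maximum over [0,∞)ⁿ at any boundary point of (0,∞)ⁿ. -/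
/-!
In the `i₀`-th slot the reduced energy is, since `c i₀ = 0`, of the form
`s ↦ K + (A / 2) s² - (1 / (2p)) (M s^p + b s^{2p})` with `A = a i₀ > 0`
(`slice_eq` for the double sum). Its derivative at `s > 0` is
`s (A - ½ (M s^{p-2} + 2 b s^p s^{p-2}))`, and because `p > 2` the bracket tends to `A > 0` as
`s → 0`. Hence the slice is strictly increasing on some closed interval `[0, δ]`
(`exists_strictMonoOn`); monotonicity up to the endpoint `0` also shows that
raising the `i₀`-th coordinate from `0` to `δ` increases the energy.
-/

open Finset

/-- The one-variable calculus fact: for small `s` the quadratic term dominates the powers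
`s^p` and `s^{2p}`, whatever the signs of their coefficients. The interval includes `0`. -/
lemma exists_strictMonoOn (p : ℝ) (hp : 2 < p) (A K M b : ℝ) (hA : 0 < A) :
    ∃ δ > (0 : ℝ), StrictMonoOn
      (fun s : ℝ => K + A / 2 * s ^ 2 - 1 / (2 * p) * (M * s ^ p + b * (s ^ p) ^ 2))
      (Set.Icc 0 δ) := by
  have hp0 : p ≠ 0 := by linarith
  have hcont : Continuous (fun s : ℝ => M * s ^ (p - 2) + 2 * b * (s ^ p * s ^ (p - 2))) := by
    have h1 : Continuous (fun s : ℝ => s ^ (p - 2)) :=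
      Real.continuous_rpow_const (by linarith)
    have h2 : Continuous (fun s : ℝ => s ^ p) := Real.continuous_rpow_const (by linarith)
    fun_prop
  have hev : ∀ᶠ s in nhds (0 : ℝ),
      M * s ^ (p - 2) + 2 * b * (s ^ p * s ^ (p - 2)) < 2 * A := by
    refine hcont.continuousAt.eventually_lt continuousAt_const ?_
    rw [Real.zero_rpow hp0, Real.zero_rpow (by linarith : p - 2 ≠ 0)]
    linarith
  obtain ⟨δ, hδ, hball⟩ := Metric.eventually_nhds_iff.mp hev
  refine ⟨δ, hδ, strictMonoOn_of_deriv_pos (convex_Icc 0 δ) ?_ ?_⟩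
  · have h2 : Continuous (fun s : ℝ => s ^ p) := Real.continuous_rpow_const (by linarith)
    exact Continuous.continuousOn (by fun_prop)
  · intro s hs
    rw [interior_Icc] at hs
    have hsmall := hball (y := s) (by rw [Real.dist_eq, sub_zero, abs_of_pos hs.1]; exact hs.2)
    have hd : HasDerivAt (fun s : ℝ => s ^ p) (p * s ^ (p - 1)) s :=
      Real.hasDerivAt_rpow_const (Or.inl hs.1.ne')
    have hderiv := (((hasDerivAt_pow 2 s).const_mul (A / 2)).const_add K).sub
      (((hd.const_mul M).add ((hd.pow 2).const_mul b)).const_mul (1 / (2 * p)))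
    have hpow : s ^ (p - 1) = s * s ^ (p - 2) := by
      rw [mul_comm, ← Real.rpow_add_one hs.1.ne']
      congr 1
      ring
    have hfact : deriv
        (fun s : ℝ => K + A / 2 * s ^ 2 - 1 / (2 * p) * (M * s ^ p + b * (s ^ p) ^ 2)) s =
        s * (A - 1 / 2 * (M * s ^ (p - 2) + 2 * b * (s ^ p * s ^ (p - 2)))) := by
      refine (HasDerivAt.deriv hderiv).trans ?_
      rw [hpow]
      field_simp
      push_cast
      ring
    rw [hfact]
    exact mul_pos hs.1 (by linarith)

/-- A quadratic form in which the `i₀`-th coordinate is raised by `q` is a quadratic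
polynomial in `q`. -/
lemma slice_eq {n : ℕ} (B : Matrix (Fin n) (Fin n) ℝ) (x : Fin n → ℝ) (i₀ : Fin n) (q : ℝ) :
    ∑ i, ∑ j, (x i + if i = i₀ then q else 0) * (x j + if j = i₀ then q else 0) * B i j =
      ∑ i, ∑ j, x i * x j * B i j +
        ((∑ j, x j * B i₀ j + ∑ i, x i * B i i₀) * q + B i₀ i₀ * q ^ 2) := by
  simp only [add_mul, mul_add, Finset.sum_add_distrib, ite_mul, mul_ite, zero_mul, mul_zero,
    Finset.sum_ite_eq', Finset.sum_ite_irrel, Finset.sum_const_zero, Finset.mem_univ, if_true,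
    Finset.sum_mul]
  have h1 : ∑ j, q * x j * B i₀ j = ∑ j, x j * B i₀ j * q :=
    Finset.sum_congr rfl fun j _ => by ring
  have h2 : ∑ i, x i * q * B i i₀ = ∑ i, x i * B i i₀ * q :=
    Finset.sum_congr rfl fun j _ => by ring
  rw [h1, h2]
  ring

/-- Near a boundary point `c` of `(0,∞)ⁿ` with `c_{i₀} = 0`, the reduced energy
`φ(c) = ½ ∑ᵢ cᵢ² aᵢ − (1/2p) ∑_{i,j} cᵢ^p cⱼ^p Bᵢⱼ` is strictly increasing in the
`i₀`-th slot for small positive values; in particular `φ` does not attain its maximum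
over `[0,∞)ⁿ` at `c`. -/
theorem reduced_energy_increasing_near_boundary {n : ℕ} (hn : 1 ≤ n)
    (p : ℝ) (hp : 2 < p)
    (a : Fin n → ℝ) (ha : ∀ i, 0 < a i)
    (B : Matrix (Fin n) (Fin n) ℝ) (hBsymm : B.IsSymm) (hBnonneg : ∀ i j, 0 ≤ B i j)
    (φ : (Fin n → ℝ) → ℝ)
    (hφ : ∀ c, φ c = (1 / 2) * ∑ i, c i ^ 2 * a i -
      (1 / (2 * p)) * ∑ i, ∑ j, c i ^ p * c j ^ p * B i j)
    (i₀ : Fin n) (c : Fin n → ℝ) (hc : ∀ i, 0 ≤ c i) (hc₀ : c i₀ = 0) :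
    (∃ ε > (0 : ℝ),
      StrictMonoOn (fun s : ℝ => φ (Function.update c i₀ s)) (Set.Ioo 0 ε)) ∧
    ∃ c' : Fin n → ℝ, (∀ i, 0 ≤ c' i) ∧ φ c < φ c' := by
  have hp0 : p ≠ 0 := by linarith
  set M : ℝ := ∑ j, c j ^ p * B i₀ j + ∑ i, c i ^ p * B i i₀ with hM
  have hslice : ∀ s : ℝ, φ (Function.update c i₀ s) =
      φ c + a i₀ / 2 * s ^ 2 - 1 / (2 * p) * (M * s ^ p + B i₀ i₀ * (s ^ p) ^ 2) := by
    intro s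
    -- Both `x ↦ x ^ 2` and `x ↦ x ^ p` vanish at `c i₀ = 0`, so updating adds a single term.
    have hsq : ∀ i, Function.update c i₀ s i ^ 2 * a i =
        c i ^ 2 * a i + if i = i₀ then s ^ 2 * a i₀ else 0 := by
      intro i
      by_cases h : i = i₀
      · subst h; simp [hc₀]
      · simp [h]
    have hpw : ∀ i, Function.update c i₀ s i ^ p = c i ^ p + if i = i₀ then s ^ p else 0 := by
      intro i
      by_cases h : i = i₀
      · subst h; simp [hc₀, Real.zero_rpow hp0]
      · simp [h]
    rw [hφ, hφ c]
    simp only [hsq, hpw]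
    rw [slice_eq B (fun i => c i ^ p) i₀ (s ^ p), Finset.sum_add_distrib,
      Finset.sum_ite_eq' Finset.univ i₀, if_pos (Finset.mem_univ _)]
    ring
  obtain ⟨δ, hδ, hmono⟩ := exists_strictMonoOn p hp (a i₀) (φ c) M (B i₀ i₀) (ha i₀)
  have hmono' : StrictMonoOn (fun s : ℝ => φ (Function.update c i₀ s)) (Set.Icc 0 δ) := by
    simpa only [hslice] using hmono
  refine ⟨⟨δ, hδ, hmono'.mono Set.Ioo_subset_Icc_self⟩, Function.update c i₀ δ, ?_, ?_⟩
  · intro i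
    by_cases h : i = i₀
    · subst h; simpa using hδ.le
    · simpa [h] using hc i
  · have h0 : Function.update c i₀ 0 = c := by rw [← hc₀, Function.update_eq_self]
    have := hmono' (Set.left_mem_Icc.mpr hδ.le) (Set.right_mem_Icc.mpr hδ.le) hδ
    simpa only [h0] using this
end

section
/- (Radial lemma of Strauss, one-dimensional form.) Let u : (0,∞) → ℝ be continuously differentiable with u(s) → 0 as s → ∞ and ∫₀^∞ (u(s)² + u′(s)²) s² ds < ∞. Then for every r > 0, u(r)² ≤ r^{−2} · ∫_r^∞ (u(s)² + u′(s)²) s² ds; in particular |u(r)| ≤ r^{−1} · (∫₀^∞ (u(s)² + u′(s)²) s² ds)^{1/2} for every r > 0. -/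
/-!
Since `u → 0` at infinity, the fundamental theorem of calculus applied to `u²` gives
`u(r)² = -∫_r^∞ 2 u u' ds`. For `s > r` one has
`|2 u u'| ≤ u² + u'² ≤ r⁻² (u² + u'²) s²`, which yields both the integrability of `2 u u'` on
`(r, ∞)` and the first bound. Enlarging the domain of integration to `(0, ∞)` and taking square
roots gives the second one.
-/

open MeasureTheory

/-- Radial lemma of Strauss (one-dimensional form): if `u` is `C¹` on `(0,∞)`,
`u(s) → 0` as `s → ∞`, and `∫₀^∞ (u² + u′²) s² ds < ∞`, then for every `r > 0`,
`u(r)² ≤ r⁻² ∫_r^∞ (u² + u′²) s² ds`, and in particular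
`|u(r)| ≤ r⁻¹ (∫₀^∞ (u² + u′²) s² ds)^{1/2}`. -/
theorem strauss_radial_lemma (u : ℝ → ℝ)
    (hu : ContDiffOn ℝ 1 u (Set.Ioi 0))
    (hlim : Filter.Tendsto u Filter.atTop (nhds 0))
    (hint : IntegrableOn (fun s => (u s ^ 2 + deriv u s ^ 2) * s ^ 2) (Set.Ioi 0)) :
    ∀ r > (0 : ℝ),
      u r ^ 2 ≤ r⁻¹ ^ 2 * ∫ s in Set.Ioi r, (u s ^ 2 + deriv u s ^ 2) * s ^ 2 ∧
      |u r| ≤ r⁻¹ *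
        Real.sqrt (∫ s in Set.Ioi 0, (u s ^ 2 + deriv u s ^ 2) * s ^ 2) := by
  intro r hr
  have hder : ∀ x ∈ Set.Ici r, HasDerivAt (fun s => u s ^ 2) (2 * u x * deriv u x) x := by
    intro x hx
    have hx0 : x ∈ Set.Ioi (0 : ℝ) := lt_of_lt_of_le hr hx
    have h : HasDerivAt u (deriv u x) x :=
      ((hu.differentiableOn one_ne_zero).differentiableAt (Ioi_mem_nhds hx0)).hasDerivAt
    simpa using h.fun_pow 2
  have hsub : Set.Ioi r ⊆ Set.Ioi (0 : ℝ) := Set.Ioi_subset_Ioi hr.le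
  have hintr := hint.mono_set hsub
  have hbound : ∀ x ∈ Set.Ioi r,
      |2 * u x * deriv u x| ≤ r⁻¹ ^ 2 * ((u x ^ 2 + deriv u x ^ 2) * x ^ 2) := by
    intro x hx
    have hrx : r < x := hx
    have h1 : |2 * u x * deriv u x| ≤ u x ^ 2 + deriv u x ^ 2 :=
      abs_le.2 ⟨by nlinarith [sq_nonneg (u x + deriv u x)],
        by nlinarith [sq_nonneg (u x - deriv u x)]⟩
    have h2 : 1 ≤ (r⁻¹ * x) ^ 2 := by
      apply one_le_pow₀
      rw [inv_mul_eq_div, one_le_div hr]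
      exact hrx.le
    calc |2 * u x * deriv u x| ≤ (u x ^ 2 + deriv u x ^ 2) * 1 := by simpa using h1
      _ ≤ (u x ^ 2 + deriv u x ^ 2) * (r⁻¹ * x) ^ 2 := by gcongr
      _ = _ := by ring
  have hmeas : AEStronglyMeasurable (fun x => 2 * u x * deriv u x)
      (volume.restrict (Set.Ioi r)) :=
    (((hu.continuousOn.mono hsub).aestronglyMeasurable measurableSet_Ioi).const_mul 2).mul
      (measurable_deriv u).aestronglyMeasurable
  have hint2 : IntegrableOn (fun x => 2 * u x * deriv u x) (Set.Ioi r) :=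
    (hintr.const_mul (r⁻¹ ^ 2)).mono' hmeas
      ((ae_restrict_iff' measurableSet_Ioi).2 (Filter.Eventually.of_forall hbound))
  have hftc := integral_Ioi_of_hasDerivAt_of_tendsto' hder hint2 (hlim.pow 2)
  have hfirst : u r ^ 2 ≤ r⁻¹ ^ 2 * ∫ s in Set.Ioi r, (u s ^ 2 + deriv u s ^ 2) * s ^ 2 := by
    have h1 : -(∫ x in Set.Ioi r, 2 * u x * deriv u x) = u r ^ 2 := by
      rw [hftc]; ring
    rw [← h1, ← integral_neg, ← integral_const_mul]
    exact setIntegral_mono_on hint2.neg (hintr.const_mul _) measurableSet_Ioi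
      fun x hx => (neg_le_abs _).trans (hbound x hx)
  refine ⟨hfirst, ?_⟩
  have hmono : ∫ s in Set.Ioi r, (u s ^ 2 + deriv u s ^ 2) * s ^ 2 ≤
      ∫ s in Set.Ioi 0, (u s ^ 2 + deriv u s ^ 2) * s ^ 2 :=
    setIntegral_mono_set hint (Filter.Eventually.of_forall fun s => by positivity)
      hsub.eventuallyLE
  have hnn : 0 ≤ ∫ s in Set.Ioi 0, (u s ^ 2 + deriv u s ^ 2) * s ^ 2 :=
    integral_nonneg fun s => by positivity
  apply abs_le_of_sq_le_sq _ (by positivity)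
  rw [mul_pow, Real.sq_sqrt hnn]
  exact hfirst.trans (by gcongr)
end

section
/- (Hardy–Littlewood–Sobolev inequality, Coulomb case in ℝ³.) There exists a constant C > 0 such that for all measurable functions f, g : ℝ³ → ℝ with ∫_{ℝ³} |f|^{6/5} < ∞ and ∫_{ℝ³} |g|^{6/5} < ∞, one has ∫_{ℝ³} ∫_{ℝ³} |f(x)| |g(y)| |x−y|^{−1} dx dy ≤ C · ‖f‖_{L^{6/5}(ℝ³)} · ‖g‖_{L^{6/5}(ℝ³)}. -/
open MeasureTheory

/-!
The proof avoids maximal functions and interpolation. Write `|f| = φ ^ 5`, `|g| = γ ^ 5`, so that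
`|f| ^ (6/5) = φ ^ 6`, and abbreviate `ρ = ‖x - y‖⁻¹`. Put `K a ρ = min (a ^ 5 ρ) (a ^ (-5) ρ ^ 6)`.
An elementary argument (`young_pointwise`) gives
`min (a ^ 5) (b ^ 5) ρ ≤ a b ^ 6 + K a ρ`, and since one of `a, b` is the smaller one,
`a ^ 5 b ^ 5 ρ ≤ 2 a ^ 6 b ^ 6 + a ^ 5 K a ρ + b ^ 5 K b ρ` (`kernel_pointwise`).

In dimension three the function `z ↦ K 1 ‖z‖⁻¹` is integrable, being of order `‖z‖⁻¹` at the origin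
and `‖z‖ ^ (-6)` at infinity, and `K a ‖z‖⁻¹ = a ^ 7 K 1 ‖a ^ 2 z‖⁻¹`, so a dilation gives
`∫ K a ‖z‖⁻¹ dz = a A` with `A = ∫ K 1 ‖z‖⁻¹ dz` (`lintegral_coulombKernel`). Integrating the
pointwise bound over `x` and `y` yields `2 F G + A F + A G` with `F = ∫ φ ^ 6`, `G = ∫ γ ^ 6`.
Normalizing to `F = G = 1` gives the theorem with `C = 2 + 2 A`.
-/

namespace CoulombHLS

/-- The space `ℝ³` with its Euclidean norm. -/
abbrev E := EuclideanSpace ℝ (Fin 3)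

/-- The truncated Coulomb kernel at height `a ^ 5`, as a function of the inverse distance `ρ`.
For `a = 0` it vanishes (for `ρ ≥ 0`). -/
noncomputable def coulombKernel (a ρ : ℝ) : ℝ := min (a ^ 5 * ρ) ((a ^ 5)⁻¹ * ρ ^ 6)

lemma coulombKernel_nonneg {a ρ : ℝ} (ha : 0 ≤ a) (hρ : 0 ≤ ρ) : 0 ≤ coulombKernel a ρ := by
  unfold coulombKernel; positivity

lemma measurable_coulombKernel : Measurable (fun p : ℝ × ℝ => coulombKernel p.1 p.2) := by
  unfold coulombKernel; fun_prop

lemma young_pointwise {a b ρ : ℝ} (ha : 0 < a) (hb : 0 ≤ b) (hρ : 0 ≤ ρ) :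
    min (a ^ 5) (b ^ 5) * ρ ≤ a * b ^ 6 + coulombKernel a ρ := by
  rcases le_total ρ (a * b) with h | h
  · have h1 : min (a ^ 5) (b ^ 5) * ρ ≤ b ^ 5 * (a * b) := by
      gcongr
      exact min_le_right _ _
    have := coulombKernel_nonneg ha.le hρ
    nlinarith
  · have h1 : min (a ^ 5) (b ^ 5) * ρ ≤ coulombKernel a ρ := by
      refine le_min (by gcongr; exact min_le_left _ _) ?_
      rw [inv_mul_eq_div, le_div_iff₀ (by positivity)]
      calc min (a ^ 5) (b ^ 5) * ρ * a ^ 5 ≤ b ^ 5 * ρ * a ^ 5 := by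
            gcongr
            exact min_le_right _ _
        _ = (a * b) ^ 5 * ρ := by ring
        _ ≤ ρ ^ 5 * ρ := by gcongr
        _ = ρ ^ 6 := by ring
    have : 0 ≤ a * b ^ 6 := by positivity
    linarith

lemma kernel_pointwise {a b ρ : ℝ} (ha : 0 ≤ a) (hb : 0 ≤ b) (hρ : 0 ≤ ρ) :
    a ^ 5 * b ^ 5 * ρ ≤
      2 * (a ^ 6 * b ^ 6) + a ^ 5 * coulombKernel a ρ + b ^ 5 * coulombKernel b ρ := by
  have hKa := coulombKernel_nonneg ha hρ
  have hKb := coulombKernel_nonneg hb hρ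
  have hKa' : 0 ≤ a ^ 5 * coulombKernel a ρ := by positivity
  have hKb' : 0 ≤ b ^ 5 * coulombKernel b ρ := by positivity
  have hab : 0 ≤ a ^ 6 * b ^ 6 := by positivity
  rcases ha.eq_or_lt with rfl | ha
  · simpa using hKb'
  rcases hb.eq_or_lt with rfl | hb
  · simpa using hKa'
  rcases le_total a b with h | h
  · have h5 : a ^ 5 ≤ b ^ 5 := by gcongr
    have h1 := mul_le_mul_of_nonneg_left (young_pointwise hb ha.le hρ) (pow_nonneg hb.le 5)
    rw [min_eq_right h5] at h1
    nlinarith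
  · have h5 : b ^ 5 ≤ a ^ 5 := by gcongr
    have h1 := mul_le_mul_of_nonneg_left (young_pointwise ha hb.le hρ) (pow_nonneg ha.le 5)
    rw [min_eq_right h5] at h1
    nlinarith

lemma integrable_coulombKernel_one : Integrable (fun z : E => coulombKernel 1 ‖z‖⁻¹) := by
  have hm : Measurable (fun r : ℝ => coulombKernel 1 r⁻¹) := by
    unfold coulombKernel; fun_prop
  rw [integrable_fun_norm_addHaar volume (f := fun r : ℝ => coulombKernel 1 r⁻¹)]
  have hm2 : Measurable (fun y : ℝ => y ^ (Module.finrank ℝ E - 1) • coulombKernel 1 y⁻¹) := by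
    simp only [smul_eq_mul]; fun_prop
  rw [← Set.Ioc_union_Ioi_eq_Ioi (zero_le_one (α := ℝ))]
  have hd : Module.finrank ℝ E - 1 = 2 := by simp
  rw [hd] at hm2 ⊢
  refine IntegrableOn.union ?_ ?_
  -- Near the origin the radial integrand is at most `r ^ 2 * r⁻¹ ≤ 1`.
  · refine Integrable.mono' (g := fun _ => (1 : ℝ)) (by simp) hm2.aestronglyMeasurable ?_
    refine (ae_restrict_iff' measurableSet_Ioc).2 (Filter.Eventually.of_forall fun y hy => ?_)
    have hy0 : 0 < y := hy.1
    have hk := coulombKernel_nonneg (zero_le_one (α := ℝ)) (inv_nonneg.2 hy0.le)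
    rw [smul_eq_mul, Real.norm_of_nonneg (by positivity)]
    calc y ^ 2 * coulombKernel 1 y⁻¹ ≤ y ^ 2 * (1 ^ 5 * y⁻¹) := by
          gcongr
          exact min_le_left _ _
      _ = y := by field_simp
      _ ≤ 1 := hy.2
  -- At infinity it is at most `r ^ 2 * r ^ (-6) = r ^ (-4)`.
  · refine Integrable.mono' (g := fun y : ℝ => y ^ (-4 : ℝ))
      (integrableOn_Ioi_rpow_of_lt (by norm_num) one_pos) hm2.aestronglyMeasurable ?_
    refine (ae_restrict_iff' measurableSet_Ioi).2 (Filter.Eventually.of_forall fun y hy => ?_)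
    have hy0 : 0 < y := one_pos.trans hy
    have hk := coulombKernel_nonneg (zero_le_one (α := ℝ)) (inv_nonneg.2 hy0.le)
    rw [smul_eq_mul, Real.norm_of_nonneg (by positivity)]
    calc y ^ 2 * coulombKernel 1 y⁻¹ ≤ y ^ 2 * ((1 ^ 5)⁻¹ * y⁻¹ ^ 6) := by
          gcongr
          exact min_le_right _ _
      _ = (y ^ 4)⁻¹ := by field_simp
      _ = y ^ (-4 : ℝ) := by
          rw [Real.rpow_neg hy0.le]; norm_cast

/-- The constant `A = ∫ K 1 ‖z‖⁻¹ dz`. -/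
noncomputable def kernelMass : ℝ := ∫ z : E, coulombKernel 1 ‖z‖⁻¹

lemma kernelMass_nonneg : 0 ≤ kernelMass :=
  integral_nonneg fun _ => coulombKernel_nonneg zero_le_one (by positivity)

lemma coulombKernel_scaling {a : ℝ} (ha : 0 < a) (z : E) :
    coulombKernel a ‖z‖⁻¹ = a ^ 7 * coulombKernel 1 ‖a ^ 2 • z‖⁻¹ := by
  have h7 : 0 ≤ a ^ 7 := by positivity
  rw [coulombKernel, coulombKernel, mul_min_of_nonneg _ _ h7, norm_smul,
    Real.norm_of_nonneg (by positivity : 0 ≤ a ^ 2), mul_inv]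
  congr 1 <;> field_simp

lemma lintegral_coulombKernel {a : ℝ} (ha : 0 < a) (x : E) :
    ∫⁻ y : E, ENNReal.ofReal (coulombKernel a ‖x - y‖⁻¹) = ENNReal.ofReal (a * kernelMass) := by
  rw [lintegral_sub_left_eq_self (fun z : E => ENNReal.ofReal (coulombKernel a ‖z‖⁻¹)) x]
  simp_rw [coulombKernel_scaling ha]
  have hi : Integrable (fun z : E => a ^ 7 * coulombKernel 1 ‖a ^ 2 • z‖⁻¹) :=
    ((integrable_comp_smul_iff volume (fun z : E => coulombKernel 1 ‖z‖⁻¹)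
      (by positivity : a ^ 2 ≠ 0)).2 integrable_coulombKernel_one).const_mul _
  rw [← ofReal_integral_eq_lintegral_ofReal hi
    (Filter.Eventually.of_forall fun z => mul_nonneg (by positivity)
      (coulombKernel_nonneg zero_le_one (by positivity)))]
  congr 1
  rw [integral_const_mul, Measure.integral_comp_smul_of_nonneg volume
    (fun z : E => coulombKernel 1 ‖z‖⁻¹) (a ^ 2) (hR := by positivity)]
  simp only [finrank_euclideanSpace, Fintype.card_fin, smul_eq_mul, kernelMass]
  field_simp

/-- Thanks to the weight `a ^ 5` the formula `∫ K a ‖z‖⁻¹ dz = a A` extends to `a = 0`. -/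
lemma lintegral_pow_mul_coulombKernel {a : ℝ} (ha : 0 ≤ a) (x : E) :
    ∫⁻ y : E, ENNReal.ofReal (a ^ 5 * coulombKernel a ‖x - y‖⁻¹)
      = ENNReal.ofReal (a ^ 6) * ENNReal.ofReal kernelMass := by
  rcases ha.eq_or_lt with rfl | ha
  · simp
  simp_rw [ENNReal.ofReal_mul (pow_nonneg ha.le 5)]
  rw [lintegral_const_mul' _ _ ENNReal.ofReal_ne_top, lintegral_coulombKernel ha,
    ← ENNReal.ofReal_mul (by positivity), ← ENNReal.ofReal_mul (by positivity)]
  congr 1; ring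

lemma double_lintegral_le {φ γ : E → ℝ} (hφ : Measurable φ) (hγ : Measurable γ)
    (hφ0 : ∀ x, 0 ≤ φ x) (hγ0 : ∀ x, 0 ≤ γ x) :
    ∫⁻ x, ∫⁻ y, ENNReal.ofReal (φ x ^ 5 * γ y ^ 5 * ‖x - y‖⁻¹) ≤
      2 * ((∫⁻ x, ENNReal.ofReal (φ x ^ 6)) * ∫⁻ y, ENNReal.ofReal (γ y ^ 6))
        + (∫⁻ x, ENNReal.ofReal (φ x ^ 6)) * ENNReal.ofReal kernelMass
        + (∫⁻ y, ENNReal.ofReal (γ y ^ 6)) * ENNReal.ofReal kernelMass := by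
  have hm1 : Measurable (fun p : E × E =>
      ENNReal.ofReal (φ p.1 ^ 5 * coulombKernel (φ p.1) ‖p.1 - p.2‖⁻¹)) := by
    have := measurable_coulombKernel.comp (f := fun p : E × E => (φ p.1, ‖p.1 - p.2‖⁻¹))
      (by fun_prop)
    have h2 : Measurable (fun p : E × E => φ p.1 ^ 5) := by fun_prop
    exact (h2.mul this).ennreal_ofReal
  have hm2 : Measurable (fun p : E × E =>
      ENNReal.ofReal (γ p.2 ^ 5 * coulombKernel (γ p.2) ‖p.1 - p.2‖⁻¹)) := by
    have := measurable_coulombKernel.comp (f := fun p : E × E => (γ p.2, ‖p.1 - p.2‖⁻¹))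
      (by fun_prop)
    have h2 : Measurable (fun p : E × E => γ p.2 ^ 5) := by fun_prop
    exact (h2.mul this).ennreal_ofReal
  have hpt : ∀ p : E × E, ENNReal.ofReal (φ p.1 ^ 5 * γ p.2 ^ 5 * ‖p.1 - p.2‖⁻¹) ≤
      2 * (ENNReal.ofReal (φ p.1 ^ 6) * ENNReal.ofReal (γ p.2 ^ 6))
        + ENNReal.ofReal (φ p.1 ^ 5 * coulombKernel (φ p.1) ‖p.1 - p.2‖⁻¹)
        + ENNReal.ofReal (γ p.2 ^ 5 * coulombKernel (γ p.2) ‖p.1 - p.2‖⁻¹) := by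
    intro p
    have ha := hφ0 p.1
    have hb := hγ0 p.2
    have hρ : 0 ≤ ‖p.1 - p.2‖⁻¹ := by positivity
    have hKa := coulombKernel_nonneg ha hρ
    have hKb := coulombKernel_nonneg hb hρ
    generalize ‖p.1 - p.2‖⁻¹ = ρ at hρ hKa hKb ⊢
    have h2 : (2 : ENNReal) = ENNReal.ofReal 2 := by simp
    rw [h2, ← ENNReal.ofReal_mul (by positivity), ← ENNReal.ofReal_mul (by positivity),
      ← ENNReal.ofReal_add (by positivity) (by positivity),
      ← ENNReal.ofReal_add (by positivity) (by positivity)]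
    exact ENNReal.ofReal_le_ofReal (kernel_pointwise ha hb hρ)
  have hmL : Measurable (fun p : E × E =>
      ENNReal.ofReal (φ p.1 ^ 5 * γ p.2 ^ 5 * ‖p.1 - p.2‖⁻¹)) := by fun_prop
  rw [← lintegral_prod (fun p : E × E =>
      ENNReal.ofReal (φ p.1 ^ 5 * γ p.2 ^ 5 * ‖p.1 - p.2‖⁻¹)) hmL.aemeasurable]
  refine (lintegral_mono hpt).trans (le_of_eq ?_)
  rw [lintegral_add_right _ hm2, lintegral_add_right _ hm1]
  congr 1
  · congr 1
    · rw [lintegral_const_mul _ (by fun_prop),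
        lintegral_prod_mul (f := fun x => ENNReal.ofReal (φ x ^ 6))
          (g := fun y => ENNReal.ofReal (γ y ^ 6)) (by fun_prop) (by fun_prop)]
    · rw [lintegral_prod _ hm1.aemeasurable]
      simp_rw [fun x : E => lintegral_pow_mul_coulombKernel (hφ0 x) x]
      rw [lintegral_mul_const _ (by fun_prop)]
  · rw [lintegral_prod_symm _ hm2.aemeasurable]
    have : ∀ y : E, ∫⁻ x : E, ENNReal.ofReal (γ y ^ 5 * coulombKernel (γ y) ‖x - y‖⁻¹)
        = ENNReal.ofReal (γ y ^ 6) * ENNReal.ofReal kernelMass := fun y => by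
      simp_rw [fun x : E => norm_sub_rev x y]
      exact lintegral_pow_mul_coulombKernel (hγ0 y) y
    simp_rw [this]
    rw [lintegral_mul_const _ (by fun_prop)]

/-- Normalization: `|f|` is a positive multiple of `φ ^ 5` with `∫ φ ^ 6 = 1`. -/
lemma exists_normalized {f : E → ℝ} (hf : Measurable f)
    (hi : Integrable (fun x => |f x| ^ ((6 : ℝ) / 5)))
    (hF : 0 < ∫ x, |f x| ^ ((6 : ℝ) / 5)) :
    ∃ φ : E → ℝ, Measurable φ ∧ (∀ x, 0 ≤ φ x) ∧ ∫⁻ x, ENNReal.ofReal (φ x ^ 6) = 1 ∧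
      ∀ x, |f x| = (∫ x, |f x| ^ ((6 : ℝ) / 5)) ^ ((5 : ℝ) / 6) * φ x ^ 5 := by
  set F := ∫ x, |f x| ^ ((6 : ℝ) / 5) with hFdef
  refine ⟨fun x => |f x| ^ ((1 : ℝ) / 5) * (F ^ ((1 : ℝ) / 6))⁻¹, by fun_prop,
    fun x => by positivity, ?_, fun x => ?_⟩
  · have h : ∀ x, (|f x| ^ ((1 : ℝ) / 5) * (F ^ ((1 : ℝ) / 6))⁻¹) ^ 6
        = |f x| ^ ((6 : ℝ) / 5) * F⁻¹ := fun x => by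
      rw [mul_pow, inv_pow, ← Real.rpow_natCast, ← Real.rpow_natCast (F ^ _),
        ← Real.rpow_mul (abs_nonneg _), ← Real.rpow_mul hF.le]
      norm_num
    simp_rw [h]
    rw [← ofReal_integral_eq_lintegral_ofReal (hi.mul_const _)
      (Filter.Eventually.of_forall fun x => by positivity), integral_mul_const, ← hFdef,
      mul_inv_cancel₀ hF.ne', ENNReal.ofReal_one]
  · rw [mul_pow, inv_pow, ← Real.rpow_natCast, ← Real.rpow_natCast (F ^ _),
        ← Real.rpow_mul (abs_nonneg _), ← Real.rpow_mul hF.le]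
    have : F ^ ((5 : ℝ) / 6) ≠ 0 := by positivity
    norm_num
    field_simp

lemma ae_eq_zero_of_integral_eq_zero {f : E → ℝ}
    (hi : Integrable (fun x => |f x| ^ ((6 : ℝ) / 5)))
    (hF : ∫ x, |f x| ^ ((6 : ℝ) / 5) = 0) : ∀ᵐ x, |f x| = 0 := by
  have h := (integral_eq_zero_iff_of_nonneg (fun x => by positivity) hi).1 hF
  filter_upwards [h] with x hx
  exact (Real.rpow_eq_zero (abs_nonneg _) (by norm_num)).1 hx

end CoulombHLS

open CoulombHLS in
/-- Hardy–Littlewood–Sobolev inequality, Coulomb case in `ℝ³`: there is `C > 0` such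
that `∬ |f(x)| |g(y)| |x−y|⁻¹ dx dy ≤ C ‖f‖_{L^{6/5}} ‖g‖_{L^{6/5}}` for all measurable
`f, g` with finite `L^{6/5}`-norm. -/
theorem hardy_littlewood_sobolev :
    ∃ C > (0 : ℝ), ∀ f g : EuclideanSpace ℝ (Fin 3) → ℝ,
      Measurable f → Measurable g →
      Integrable (fun x => |f x| ^ ((6 : ℝ) / 5)) →
      Integrable (fun x => |g x| ^ ((6 : ℝ) / 5)) →
      ∫⁻ x, ∫⁻ y, ENNReal.ofReal (|f x| * |g y| * ‖x - y‖⁻¹) ≤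
        ENNReal.ofReal (C * (∫ x, |f x| ^ ((6 : ℝ) / 5)) ^ ((5 : ℝ) / 6) *
          (∫ x, |g x| ^ ((6 : ℝ) / 5)) ^ ((5 : ℝ) / 6)) := by
  have hA := kernelMass_nonneg
  refine ⟨2 + kernelMass + kernelMass, by positivity, fun f g hf hg hfi hgi => ?_⟩
  have hF0 : 0 ≤ ∫ x, |f x| ^ ((6 : ℝ) / 5) := integral_nonneg fun x => by positivity
  have hG0 : 0 ≤ ∫ x, |g x| ^ ((6 : ℝ) / 5) := integral_nonneg fun x => by positivity
  rcases hF0.eq_or_lt with hF | hF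
  · have h0 := ae_eq_zero_of_integral_eq_zero hfi hF.symm
    have : ∫⁻ x, ∫⁻ y, ENNReal.ofReal (|f x| * |g y| * ‖x - y‖⁻¹) = 0 := by
      rw [← lintegral_zero (μ := (volume : Measure E))]
      refine lintegral_congr_ae ?_
      filter_upwards [h0] with x hx
      simp [hx]
    rw [this]; exact zero_le
  rcases hG0.eq_or_lt with hG | hG
  · have h0 := ae_eq_zero_of_integral_eq_zero hgi hG.symm
    have : ∀ x, ∫⁻ y, ENNReal.ofReal (|f x| * |g y| * ‖x - y‖⁻¹) = 0 := fun x => by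
      rw [← lintegral_zero (μ := (volume : Measure E))]
      refine lintegral_congr_ae ?_
      filter_upwards [h0] with y hy
      simp [hy]
    simp [this]
  obtain ⟨φ, hφm, hφ0, hφ1, hφ⟩ := exists_normalized hf hfi hF
  obtain ⟨γ, hγm, hγ0, hγ1, hγ⟩ := exists_normalized hg hgi hG
  set c := (∫ x, |f x| ^ ((6 : ℝ) / 5)) ^ ((5 : ℝ) / 6) with hc
  set d := (∫ x, |g x| ^ ((6 : ℝ) / 5)) ^ ((5 : ℝ) / 6) with hd
  have hc0 : 0 ≤ c := by positivity
  have hd0 : 0 ≤ d := by positivity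
  have hpt : ∀ x y, ENNReal.ofReal (|f x| * |g y| * ‖x - y‖⁻¹)
      = ENNReal.ofReal (c * d) * ENNReal.ofReal (φ x ^ 5 * γ y ^ 5 * ‖x - y‖⁻¹) := fun x y => by
    rw [← ENNReal.ofReal_mul (by positivity), hφ x, hγ y]
    congr 1; ring
  simp_rw [hpt, lintegral_const_mul' _ _ ENNReal.ofReal_ne_top]
  have hmain := double_lintegral_le hφm hγm hφ0 hγ0
  rw [hφ1, hγ1, one_mul, one_mul, mul_one] at hmain
  calc _ ≤ ENNReal.ofReal (c * d) *
        (2 + ENNReal.ofReal kernelMass + ENNReal.ofReal kernelMass) := by gcongr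
    _ = ENNReal.ofReal ((2 + kernelMass + kernelMass) * c * d) := by
      have h2 : (2 : ENNReal) = ENNReal.ofReal 2 := by simp
      rw [h2, ← ENNReal.ofReal_add (by positivity) hA,
        ← ENNReal.ofReal_add (by positivity) hA, ← ENNReal.ofReal_mul (by positivity)]
      congr 1; ring
end
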